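/- There exists a length metric space X homeomorphic to the plane ℂ with locally finite Hausdorff 2-measure that admits weakly quasiconformal parametrizations by both the open unit disk 𝔻 and the plane ℂ; that is, there exist K₁, K₂ ≥ 1, a weakly K₁-quasiconformal map from 𝔻 onto X and a weakly K₂-quasiconformal map from ℂ onto X. -/

import Mathlib

open Metric MeasureTheory Filter Set
open scoped ENNReal NNReal Topology

/-!
STATEMENT 9: Uniformization of length surfaces by weakly (4/π)-quasiconformal maps.

Let `X` be a length surface of locally finite Hausdorff 2-measure homeomorphic to the
2-sphere, the closed unit disk, or the plane `ℂ`.  Then there is a weakly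
`4/π`-quasiconformal map `h : Ω → X`, where `Ω` is respectively the 2-sphere, the closed
unit disk, or (in the third case) either the open unit disk or the plane.

The 2-sphere is realized as the unit sphere in Euclidean 3-space; its restricted metric
induces the same curve lengths, the same Hausdorff 2-measure and hence the same moduli of
curve families as the Riemannian spherical metric.  A map is weakly `K`-quasiconformal if
it is continuous, surjective and monotone (preimages of points are connected) and
`Mod Γ ≤ K · Mod h(Γ)` for every curve family `Γ`, where the 2-modulus is computed with
respect to the Hausdorff 2-measure (normalized so as to coincide with Lebesgue measure on
the plane) and line integrals are with respect to arc length via unit-speed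
reparametrization.
-/

/-- A curve in a metric space: a continuous map on a compact interval. -/
structure Curve (X : Type*) [MetricSpace X] where
  a : ℝ
  b : ℝ
  hab : a ≤ b
  toFun : ℝ → X
  cont : ContinuousOn toFun (Set.Icc a b)

namespace Curve
variable {X Y : Type*} [MetricSpace X] [MetricSpace Y]

/-- The length of a curve: the total variation of its parametrization. -/
noncomputable def length (γ : Curve X) : ℝ≥0∞ := eVariationOn γ.toFun (Set.Icc γ.a γ.b)

/-- The integral of `ρ` along a (rectifiable) curve with respect to arc length, computed
via the unit-speed (natural) reparametrization of the curve. -/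
noncomputable def lineIntegral (γ : Curve X) (ρ : X → ℝ≥0∞) : ℝ≥0∞ :=
  ∫⁻ s in Set.Icc (0 : ℝ) γ.length.toReal,
    ρ (naturalParameterization γ.toFun (Set.Icc γ.a γ.b) γ.a s)

/-- The image curve `h ∘ γ` under a continuous map `h`. -/
def map (γ : Curve X) (h : X → Y) (hh : Continuous h) : Curve Y :=
  ⟨γ.a, γ.b, γ.hab, h ∘ γ.toFun, hh.comp_continuousOn γ.cont⟩

end Curve

/-- The Hausdorff 2-measure, normalized so as to coincide with Lebesgue measure on `ℝ²`. -/
noncomputable def hausdorff2 (X : Type*) [MetricSpace X] [MeasurableSpace X] [BorelSpace X] :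
    Measure X := (ENNReal.ofReal (Real.pi / 4)) • MeasureTheory.Measure.hausdorffMeasure 2

/-- `ρ` is admissible for the curve family `Γ` if it is Borel and `∫_γ ρ ds ≥ 1` for
every rectifiable curve `γ ∈ Γ`. -/
def Admissible {X : Type*} [MetricSpace X] [MeasurableSpace X] [BorelSpace X]
    (ρ : X → ℝ≥0∞) (Γ : Set (Curve X)) : Prop :=
  Measurable ρ ∧ ∀ γ ∈ Γ, γ.length ≠ ⊤ → 1 ≤ γ.lineIntegral ρ

/-- The 2-modulus of a curve family, with respect to the Hausdorff 2-measure. -/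
noncomputable def modulus {X : Type*} [MetricSpace X] [MeasurableSpace X] [BorelSpace X]
    (Γ : Set (Curve X)) : ℝ≥0∞ :=
  ⨅ (ρ : X → ℝ≥0∞) (_ : Admissible ρ Γ), ∫⁻ x, (ρ x) ^ 2 ∂(hausdorff2 X)

/-- A length space: the distance between any two points is the infimum of the lengths
of curves joining them. -/
def IsLengthSpace (X : Type*) [MetricSpace X] : Prop :=
  ∀ x y : X, edist x y =
    ⨅ γ : {γ : Curve X // γ.toFun γ.a = x ∧ γ.toFun γ.b = y}, γ.1.length

/-- A weakly `K`-quasiconformal map: continuous, surjective, monotone, and satisfying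
`Mod Γ ≤ K · Mod h(Γ)` for every curve family `Γ`. -/
def WeaklyQC {A X : Type*} [MetricSpace A] [MeasurableSpace A] [BorelSpace A]
    [MetricSpace X] [MeasurableSpace X] [BorelSpace X] (K : ℝ) (h : A → X) : Prop :=
  ∃ hc : Continuous h, Function.Surjective h ∧ (∀ x : X, IsPreconnected (h ⁻¹' {x})) ∧
    ∀ Γ : Set (Curve A),
      modulus Γ ≤ ENNReal.ofReal K * modulus ((fun γ => γ.map h hc) '' Γ)

/-!
Give the slit plane the conformal length element `weight y * |dz|`. The weight is `1` at the
integer heights and decays exponentially between them, at the rate `2 ^ n` in the strip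
`n ≤ y ≤ n + 1`; there the slits are the vertical segments with abscissas
`(k + 1 / 2) / 2 ^ n`. Collapsing every slit to a point gives the surface `X`, and the collapsing
map is a weakly quasiconformal parametrization of `X` by `ℂ`, conformal off the null set of slits.

The weight has finite total mass in the vertical direction. At height `y`, each gap
between neighbouring slits can be squeezed horizontally by the factor `weight y`, while the room
gained is filled by segments which are mapped to the slit and hence to a single point of `X`. Then
both coordinates scale by `weight y`, and replacing the height by the primitive of the
weight yields a second parametrization, by a half-plane bounded from above, that is, by the disk.
-/

/-! ### Curves and pull-back of modulus -/

section ArcLength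

variable {E : Type*} [MetricSpace E]

theorem continuousOn_variationOnFromTo {f : ℝ → E} {a b : ℝ} (hab : a ≤ b)
    (hf : ContinuousOn f (Icc a b)) (hv : BoundedVariationOn f (Icc a b)) :
    ContinuousOn (variationOnFromTo f (Icc a b) a) (Icc a b) := by
  intro x hx
  have hvar : Tendsto (fun y => (eVariationOn f (Icc a b ∩ Icc y x)).toReal +
      (eVariationOn f (Icc a b ∩ Icc x y)).toReal) (𝓝[Icc a b] x) (𝓝 0) := by
    have hleft := hv.tendsto_eVariationOn_Icc_zero_left (x := x) ((hf x hx).mono inter_subset_left)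
    have hright := hv.tendsto_eVariationOn_Icc_zero_right x ((hf x hx).mono inter_subset_left)
    simpa using ((ENNReal.tendsto_toReal ENNReal.zero_ne_top).comp hleft).add
      ((ENNReal.tendsto_toReal ENNReal.zero_ne_top).comp hright)
  rw [ContinuousWithinAt, tendsto_iff_dist_tendsto_zero]
  refine squeeze_zero' (Eventually.of_forall fun _ => dist_nonneg) ?_ hvar
  filter_upwards [self_mem_nhdsWithin] with y hy
  rw [Real.dist_eq,
    variationOnFromTo.sub_right hv.locallyBoundedVariationOn (left_mem_Icc.2 hab) hy hx]
  rcases le_total x y with h | h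
  · rw [variationOnFromTo.eq_of_le _ _ h, abs_of_nonneg ENNReal.toReal_nonneg]
    exact le_add_of_nonneg_left ENNReal.toReal_nonneg
  · rw [variationOnFromTo.eq_of_ge _ _ h, abs_neg, abs_of_nonneg ENNReal.toReal_nonneg]
    exact le_add_of_nonneg_right ENNReal.toReal_nonneg

theorem lipschitzOnWith_one_of_hasUnitSpeedOn {f : ℝ → E} {s : Set ℝ} (hf : HasUnitSpeedOn f s) :
    LipschitzOnWith 1 f s := by
  intro x hx y hy
  wlog hxy : x ≤ y generalizing x y
  · rw [edist_comm, edist_comm x]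
    exact this hy hx (le_of_not_ge hxy)
  calc edist (f x) (f y) ≤ eVariationOn f (s ∩ Icc x y) :=
        eVariationOn.edist_le f ⟨hx, left_mem_Icc.2 hxy⟩ ⟨hy, right_mem_Icc.2 hxy⟩
    _ = (1 : ℝ≥0) * edist x y := by
        rw [hf hx hy, edist_comm, edist_dist, Real.dist_eq, abs_of_nonneg (sub_nonneg.2 hxy),
          NNReal.coe_one, one_mul, ENNReal.coe_one, one_mul]

theorem lintegral_image_Icc_le_of_monotoneOn {θ : ℝ → ℝ} {a b : ℝ} {C : ℝ≥0}
    (hmono : MonotoneOn θ (Icc a b)) (hlip : LipschitzOnWith C θ (Icc a b))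
    {w : ℝ → ℝ≥0∞} (hw : ∀ r ∈ Ioo a b, ENNReal.ofReal (deriv θ r) ≤ w r) (k : ℝ → ℝ≥0∞) :
    ∫⁻ u in θ '' Icc a b, k u ≤ ∫⁻ r in Icc a b, w r * k (θ r) := by
  set D : Set ℝ := Ioo a b ∩ {r | DifferentiableAt ℝ θ r}
  have hDm : MeasurableSet D := measurableSet_Ioo.inter (measurableSet_of_differentiableAt ℝ θ)
  have hDsub : D ⊆ Icc a b := inter_subset_left.trans Ioo_subset_Icc_self
  have hnull : volume (Icc a b \ D) = 0 := by
    have hsub : Icc a b \ D ⊆ {a, b} ∪ {r | ¬(r ∈ Ioo a b → DifferentiableAt ℝ θ r)} := by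
      rintro r ⟨hr, hrD⟩
      by_cases hIoo : r ∈ Ioo a b
      · exact Or.inr fun h => hrD ⟨hIoo, h hIoo⟩
      · rw [← Icc_sdiff_Ioo_same (hr.1.trans hr.2)]
        exact Or.inl ⟨hr, hIoo⟩
    have hdiff : ∀ᵐ r, r ∈ Ioo a b → DifferentiableAt ℝ θ r := by
      filter_upwards [(hmono.mono Ioo_subset_Icc_self).ae_differentiableWithinAt_of_mem]
        with r hr hIoo
      exact (hr hIoo).differentiableAt (Ioo_mem_nhds hIoo.1 hIoo.2)
    exact measure_mono_null hsub (measure_union_null ((toFinite _).measure_zero _) (ae_iff.1 hdiff))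
  have hnull_image : volume (θ '' (Icc a b \ D)) = 0 := by
    have := (hlip.mono sdiff_subset).hausdorffMeasure_image_le (s := Icc a b \ D) zero_le_one
    rw [hausdorffMeasure_real, hnull, mul_zero] at this
    exact le_antisymm this zero_le
  calc ∫⁻ u in θ '' Icc a b, k u
      ≤ (∫⁻ u in θ '' D, k u) + ∫⁻ u in θ '' (Icc a b \ D), k u := by
        rw [← union_sdiff_cancel hDsub, image_union]
        simpa using lintegral_union_le k (θ '' D) (θ '' (Icc a b \ D))
    _ = ∫⁻ u in θ '' D, k u := by rw [setLIntegral_measure_zero _ _ hnull_image, add_zero]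
    _ = ∫⁻ r in D, ENNReal.ofReal (deriv θ r) * k (θ r) :=
        lintegral_image_eq_lintegral_deriv_mul_of_monotoneOn hDm
          (fun r hr => hr.2.hasDerivAt.hasDerivWithinAt) (hmono.mono hDsub) k
    _ ≤ ∫⁻ r in D, w r * k (θ r) :=
        setLIntegral_mono' hDm fun r hr => mul_le_mul_left (hw r hr.1) _
    _ ≤ ∫⁻ r in Icc a b, w r * k (θ r) := lintegral_mono_set hDsub

end ArcLength

/-- `h` is Lipschitz near each point `a`, with constant `g a`. This is the pointwise
notion of upper gradient that lets `h` be compared with `g` along curves. -/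
def LocalLipschitzBound {A X : Type*} [MetricSpace A] [MetricSpace X] (h : A → X)
    (g : A → ℝ≥0) : Prop :=
  ∀ a, ∃ U ∈ 𝓝 a, LipschitzOnWith (g a) h U

theorem LocalLipschitzBound.locallyLipschitz {A X : Type*} [MetricSpace A] [MetricSpace X]
    {h : A → X} {g : A → ℝ≥0} (hg : LocalLipschitzBound h g) : LocallyLipschitz h := fun a =>
  ⟨g a, hg a⟩

namespace Curve

variable {A X : Type*} [MetricSpace A] [MetricSpace X]

/-- The length of the part of `γ` between the parameters `γ.a` and `x`. -/
noncomputable def arcLength (γ : Curve X) : ℝ → ℝ :=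
  variationOnFromTo γ.toFun (Icc γ.a γ.b) γ.a

/-- The unit-speed reparametrization of `γ`, on the interval `[0, γ.length]`. -/
noncomputable def natural (γ : Curve X) : ℝ → X :=
  naturalParameterization γ.toFun (Icc γ.a γ.b) γ.a

section Rectifiable

variable {γ : Curve X}

theorem boundedVariationOn (hγ : γ.length ≠ ⊤) :
    BoundedVariationOn γ.toFun (Icc γ.a γ.b) := hγ

theorem monotoneOn_arcLength (hγ : γ.length ≠ ⊤) :
    MonotoneOn γ.arcLength (Icc γ.a γ.b) :=
  variationOnFromTo.monotoneOn (boundedVariationOn hγ).locallyBoundedVariationOn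
    (left_mem_Icc.2 γ.hab)

theorem ofReal_arcLength (hγ : γ.length ≠ ⊤) {x : ℝ} (hx : x ∈ Icc γ.a γ.b) :
    ENNReal.ofReal (γ.arcLength x) = eVariationOn γ.toFun (Icc γ.a x) := by
  rw [arcLength, variationOnFromTo.eq_of_le _ _ hx.1,
    inter_eq_self_of_subset_right (Icc_subset_Icc_right hx.2), ENNReal.ofReal_toReal]
  exact (boundedVariationOn hγ).mono (Icc_subset_Icc_right hx.2)

theorem image_arcLength_Icc (hγ : γ.length ≠ ⊤) {x : ℝ} (hx : x ∈ Icc γ.a γ.b) :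
    γ.arcLength '' Icc γ.a x = Icc 0 (γ.arcLength x) := by
  have hsub : Icc γ.a x ⊆ Icc γ.a γ.b := Icc_subset_Icc_right hx.2
  have hcont := continuousOn_variationOnFromTo γ.hab γ.cont (boundedVariationOn hγ)
  have := (hcont.mono hsub).image_Icc_of_monotoneOn hx.1 ((monotoneOn_arcLength hγ).mono hsub)
  rwa [variationOnFromTo.self] at this

theorem natural_arcLength (hγ : γ.length ≠ ⊤) {x : ℝ} (hx : x ∈ Icc γ.a γ.b) :
    γ.natural (γ.arcLength x) = γ.toFun x :=
  edist_eq_zero.1 <| edist_naturalParameterization_eq_zero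
    (boundedVariationOn hγ).locallyBoundedVariationOn (left_mem_Icc.2 γ.hab) hx

theorem lipschitzOnWith_natural (hγ : γ.length ≠ ⊤) :
    LipschitzOnWith 1 γ.natural (Icc 0 (γ.arcLength γ.b)) := by
  rw [← image_arcLength_Icc hγ (right_mem_Icc.2 γ.hab)]
  exact lipschitzOnWith_one_of_hasUnitSpeedOn <| has_unit_speed_naturalParameterization _
    (boundedVariationOn hγ).locallyBoundedVariationOn (left_mem_Icc.2 γ.hab)

theorem lipschitzOnWith_arcLength (hγ : γ.length ≠ ⊤) {s : Set ℝ} [s.OrdConnected]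
    (hs : s ⊆ Icc γ.a γ.b) {L : ℝ≥0} (hL : LipschitzOnWith L γ.toFun s) :
    LipschitzOnWith L γ.arcLength s := by
  refine LipschitzOnWith.of_dist_le_mul fun x hx y hy => ?_
  wlog hxy : x ≤ y generalizing x y
  · rw [dist_comm, dist_comm x]
    exact this y hy x hx (le_of_not_ge hxy)
  have hsub : Icc x y ⊆ s := OrdConnected.out ‹_› hx hy
  have hvar : eVariationOn γ.toFun (Icc x y) ≤ L * ENNReal.ofReal (y - x) := by
    rw [← eVariationOn_id_Icc]
    exact hL.comp_eVariationOn_le (f := γ.toFun) (g := id) hsub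
  rw [dist_comm, dist_comm x, Real.dist_eq, Real.dist_eq, abs_of_nonneg (sub_nonneg.2 hxy),
    abs_of_nonneg (sub_nonneg.2 (monotoneOn_arcLength hγ (hs hx) (hs hy) hxy)), arcLength,
    variationOnFromTo.sub_right (boundedVariationOn hγ).locallyBoundedVariationOn
      (left_mem_Icc.2 γ.hab) (hs hy) (hs hx),
    variationOnFromTo.eq_of_le _ _ hxy, inter_eq_self_of_subset_right (hsub.trans hs)]
  refine ENNReal.toReal_le_of_le_ofReal (by positivity) (hvar.trans_eq ?_)
  rw [ENNReal.ofReal_mul NNReal.zero_le_coe, ENNReal.ofReal_coe_nnreal]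

end Rectifiable

theorem arcLength_right (γ : Curve X) : γ.arcLength γ.b = γ.length.toReal := by
  rw [arcLength, variationOnFromTo.eq_of_le _ _ γ.hab, inter_self, length]

theorem arcLength_nonneg (γ : Curve X) {x : ℝ} (hx : γ.a ≤ x) : 0 ≤ γ.arcLength x :=
  variationOnFromTo.nonneg_of_le _ _ hx

/-- The curve `γ` parametrized by arc length. -/
noncomputable def unitSpeed (γ : Curve X) (hγ : γ.length ≠ ⊤) : Curve X :=
  ⟨0, γ.arcLength γ.b, γ.arcLength_nonneg γ.hab, γ.natural,
    (lipschitzOnWith_natural hγ).continuousOn⟩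

theorem length_map_ne_top {h : A → X} (hh : LocallyLipschitz h) {γ : Curve A}
    (hγ : γ.length ≠ ⊤) : (γ.map h hh.continuous).length ≠ ⊤ := by
  obtain ⟨C, hC⟩ := LocallyLipschitzOn.exists_lipschitzOnWith_of_compact
    (isCompact_Icc.image_of_continuousOn γ.cont) (hh.locallyLipschitzOn (s := _))
  exact hC.comp_boundedVariationOn (mapsTo_image _ _) hγ

theorem length_unitSpeed_ne_top {γ : Curve X} (hγ : γ.length ≠ ⊤) :
    (γ.unitSpeed hγ).length ≠ ⊤ := by
  refine ne_top_of_le_ne_top ?_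
    ((lipschitzOnWith_natural hγ).comp_eVariationOn_le (g := id) (mapsTo_id _))
  rw [eVariationOn_id_Icc]
  finiteness

theorem arcLength_map_unitSpeed {h : A → X} (hh : LocallyLipschitz h) {γ : Curve A}
    (hγ : γ.length ≠ ⊤) {x : ℝ} (hx : x ∈ Icc γ.a γ.b) :
    ((γ.unitSpeed hγ).map h hh.continuous).arcLength (γ.arcLength x) =
      (γ.map h hh.continuous).arcLength x := by
  have hsub : Icc γ.a x ⊆ Icc γ.a γ.b := Icc_subset_Icc_right hx.2
  have hmem : γ.arcLength x ∈ Icc 0 (γ.arcLength γ.b) := ⟨γ.arcLength_nonneg hx.1,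
    monotoneOn_arcLength hγ hx (right_mem_Icc.2 γ.hab) hx.2⟩
  rw [← ENNReal.ofReal_eq_ofReal_iff
      (arcLength_nonneg ((γ.unitSpeed hγ).map h hh.continuous) hmem.1)
      (arcLength_nonneg (γ.map h hh.continuous) hx.1),
    ofReal_arcLength (length_map_ne_top hh (length_unitSpeed_ne_top hγ)) hmem,
    ofReal_arcLength (length_map_ne_top hh hγ) hx]
  change eVariationOn (h ∘ γ.natural) (Icc 0 _) = eVariationOn (h ∘ γ.toFun) (Icc γ.a x)
  rw [← image_arcLength_Icc hγ hx,
    ← eVariationOn.comp_eq_of_monotoneOn _ _ ((monotoneOn_arcLength hγ).mono hsub)]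
  exact eVariationOn.congr fun y hy => congrArg h (natural_arcLength hγ (hsub hy))

theorem deriv_arcLength_map_unitSpeed_le {h : A → X} {g : A → ℝ≥0} (hg : LocalLipschitzBound h g)
    {γ : Curve A} (hγ : γ.length ≠ ⊤) {r : ℝ} (hr : r ∈ Ioo 0 (γ.arcLength γ.b)) :
    ENNReal.ofReal
      (deriv ((γ.unitSpeed hγ).map h hg.locallyLipschitz.continuous).arcLength r) ≤
        g (γ.natural r) := by
  obtain ⟨U, hU, hL⟩ := hg (γ.natural r)
  have hIcc : Icc 0 (γ.arcLength γ.b) ∈ 𝓝 r := Icc_mem_nhds hr.1 hr.2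
  have hUr : γ.natural ⁻¹' U ∈ 𝓝 r :=
    ((lipschitzOnWith_natural hγ).continuousOn.continuousAt hIcc) hU
  obtain ⟨ε, hε, hball⟩ := Metric.mem_nhds_iff.1 (inter_mem hIcc hUr)
  rw [Real.ball_eq_Ioo] at hball
  have hcomp : LipschitzOnWith (g (γ.natural r)) (h ∘ γ.natural) (Ioo (r - ε) (r + ε)) := by
    simpa using hL.comp ((lipschitzOnWith_natural hγ).mono fun x hx => (hball hx).1)
      fun x hx => (hball hx).2
  have hlip := lipschitzOnWith_arcLength
    (length_map_ne_top hg.locallyLipschitz (length_unitSpeed_ne_top hγ))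
    (fun x hx => (hball hx).1) hcomp
  refine ENNReal.ofReal_le_of_le_toReal ?_
  exact (le_abs_self _).trans (norm_deriv_le_of_lipschitzOn
    (Ioo_mem_nhds (sub_lt_self r hε) (lt_add_of_pos_right r hε)) hlip)

/-- The time change `θ` from the arc length of `γ` to that of `h ∘ γ` is Lipschitz and satisfies
`θ' ≤ g`, so this is the change of variables formula for `θ`. -/
theorem lineIntegral_map_le {h : A → X} {g : A → ℝ≥0} (hg : LocalLipschitzBound h g)
    {γ : Curve A} (hγ : γ.length ≠ ⊤) (ρ : X → ℝ≥0∞) :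
    (γ.map h hg.locallyLipschitz.continuous).lineIntegral ρ ≤
      γ.lineIntegral fun a => g a * ρ (h a) := by
  have hh := hg.locallyLipschitz
  set η : Curve X := (γ.unitSpeed hγ).map h hh.continuous
  have hηfin : η.length ≠ ⊤ := length_map_ne_top hh (length_unitSpeed_ne_top hγ)
  have hηright : η.arcLength (γ.arcLength γ.b) = (γ.map h hh.continuous).length.toReal := by
    rw [arcLength_map_unitSpeed hh hγ (right_mem_Icc.2 γ.hab), ← arcLength_right]
    rfl
  have himage : η.arcLength '' Icc 0 (γ.arcLength γ.b) = Icc 0 (η.arcLength (γ.arcLength γ.b)) :=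
    image_arcLength_Icc hηfin (right_mem_Icc.2 η.hab)
  have hnatural : ∀ r ∈ Icc 0 (γ.arcLength γ.b),
      (γ.map h hh.continuous).natural (η.arcLength r) = h (γ.natural r) := by
    intro r hr
    rw [← image_arcLength_Icc hγ (right_mem_Icc.2 γ.hab)] at hr
    obtain ⟨x, hx, rfl⟩ := hr
    rw [arcLength_map_unitSpeed hh hγ hx, natural_arcLength (length_map_ne_top hh hγ) hx,
      natural_arcLength hγ hx]
    rfl
  obtain ⟨C, hC⟩ : ∃ C, LipschitzOnWith C η.toFun (Icc 0 (γ.arcLength γ.b)) := by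
    obtain ⟨C, hC⟩ := LocallyLipschitzOn.exists_lipschitzOnWith_of_compact
      (isCompact_Icc.image_of_continuousOn (γ.unitSpeed hγ).cont) (hh.locallyLipschitzOn (s := _))
    exact ⟨C * 1, hC.comp (lipschitzOnWith_natural hγ) (mapsTo_image _ _)⟩
  calc ∫⁻ s in Icc 0 (γ.map h hh.continuous).length.toReal, ρ ((γ.map h hh.continuous).natural s)
      = ∫⁻ s in η.arcLength '' Icc 0 (γ.arcLength γ.b),
          ρ ((γ.map h hh.continuous).natural s) := by rw [himage, hηright]
    _ ≤ ∫⁻ r in Icc 0 (γ.arcLength γ.b),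
          g (γ.natural r) * ρ ((γ.map h hh.continuous).natural (η.arcLength r)) :=
        lintegral_image_Icc_le_of_monotoneOn (monotoneOn_arcLength hηfin)
          (lipschitzOnWith_arcLength hηfin subset_rfl hC)
          (fun r hr => deriv_arcLength_map_unitSpeed_le hg hγ hr) _
    _ = ∫⁻ r in Icc 0 γ.length.toReal, g (γ.natural r) * ρ (h (γ.natural r)) := by
        rw [← arcLength_right]
        exact setLIntegral_congr_fun measurableSet_Icc fun r hr => by rw [hnatural r hr]

end Curve

/-- Near each point of `S`, the map `h` restricted to `S` expands distances at least by the factor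
`sup g / C`: together with `LocalLipschitzBound h g` this says that `h` distorts distances in `S`
infinitesimally by a ratio at most `C`. -/
def LocallyExpandsOn {A X : Type*} [MetricSpace A] [MetricSpace X] (h : A → X) (g : A → ℝ≥0)
    (C : ℝ≥0) (S : Set A) : Prop :=
  ∀ a ∈ S, ∃ U ∈ 𝓝 a, ∃ M : ℝ≥0, (∀ x ∈ U ∩ S, g x ≤ M) ∧
    ∀ x ∈ U ∩ S, ∀ y ∈ U ∩ S, M * dist x y ≤ C * dist (h x) (h y)

section Expansion

variable {A X : Type*} [MetricSpace A] [MeasurableSpace A] [BorelSpace A]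
  [MetricSpace X] [MeasurableSpace X] [BorelSpace X]

theorem rpow_mul_hausdorffMeasure_le {h : A → X} {S : Set A} {M C : ℝ≥0} {d : ℝ} (hd : 0 < d)
    (hexp : ∀ x ∈ S, ∀ y ∈ S, M * dist x y ≤ C * dist (h x) (h y)) :
    (M : ℝ≥0∞) ^ d * μH[d] S ≤ (C : ℝ≥0∞) ^ d * μH[d] (h '' S) := by
  rcases eq_or_ne M 0 with rfl | hM
  · simp [hd]
  have hanti : AntilipschitzWith (C / M) (S.domRestrict h) :=
    AntilipschitzWith.of_le_mul_dist fun x y => by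
      rw [NNReal.coe_div, div_mul_eq_mul_div, le_div_iff₀' (NNReal.coe_pos.2 hM.bot_lt)]
      exact hexp x x.2 y y.2
  have hle := hanti.le_hausdorffMeasure_image hd.le univ
  rw [← (isometry_subtype_coe (s := S)).hausdorffMeasure_image (Or.inl hd.le), image_univ,
    Subtype.range_coe, image_univ, range_domRestrict] at hle
  calc (M : ℝ≥0∞) ^ d * μH[d] S
      ≤ (M : ℝ≥0∞) ^ d * (((C / M : ℝ≥0) : ℝ≥0∞) ^ d * μH[d] (h '' S)) := by gcongr
    _ = (C : ℝ≥0∞) ^ d * μH[d] (h '' S) := by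
        rw [← mul_assoc, ← ENNReal.mul_rpow_of_nonneg _ _ hd.le, ← ENNReal.coe_mul,
          mul_div_cancel₀ _ hM]

theorem setLIntegral_comp_le_of_expands {h : A → X} (hc : Continuous h) {g : A → ℝ≥0}
    {C M : ℝ≥0} {E : Set A} (hE : MeasurableSet E) (hg : ∀ x ∈ E, g x ≤ M)
    (hexp : ∀ x ∈ E, ∀ y ∈ E, M * dist x y ≤ C * dist (h x) (h y))
    {ρ : X → ℝ≥0∞} (hρ : Measurable ρ) :
    ∫⁻ x in E, (g x * ρ (h x)) ^ 2 ∂(μH[2] : Measure A) ≤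
      (C : ℝ≥0∞) ^ 2 * ∫⁻ x in h '' E, ρ x ^ 2 ∂(μH[2] : Measure X) := by
  have hmeasure : (M : ℝ≥0∞) ^ 2 • Measure.map h ((μH[2] : Measure A).restrict E) ≤
      (C : ℝ≥0∞) ^ 2 • (μH[2] : Measure X).restrict (h '' E) := by
    refine Measure.le_iff.2 fun T hT => ?_
    have hle := rpow_mul_hausdorffMeasure_le two_pos fun x (hx : x ∈ h ⁻¹' T ∩ E) y hy =>
      hexp x hx.2 y hy.2
    rwa [image_preimage_inter, ENNReal.rpow_two, ENNReal.rpow_two,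
      ← Measure.restrict_apply hT, ← Measure.restrict_apply (hc.measurable hT),
      ← Measure.map_apply hc.measurable hT] at hle
  have hρ2 : Measurable fun x => ρ x ^ 2 := hρ.pow_const 2
  calc ∫⁻ x in E, (g x * ρ (h x)) ^ 2 ∂μH[2]
      ≤ ∫⁻ x in E, (M : ℝ≥0∞) ^ 2 * ρ (h x) ^ 2 ∂μH[2] := by
        refine setLIntegral_mono' hE fun x hx => ?_
        rw [mul_pow]
        gcongr
        exact mod_cast hg x hx
    _ = ∫⁻ y, ρ y ^ 2 ∂((M : ℝ≥0∞) ^ 2 • Measure.map h ((μH[2] : Measure A).restrict E)) := by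
        rw [lintegral_smul_measure, smul_eq_mul, lintegral_map hρ2 hc.measurable,
          lintegral_const_mul' _ _ (by finiteness)]
    _ ≤ ∫⁻ y, ρ y ^ 2 ∂((C : ℝ≥0∞) ^ 2 • (μH[2] : Measure X).restrict (h '' E)) :=
        lintegral_mono' hmeasure le_rfl
    _ = (C : ℝ≥0∞) ^ 2 * ∫⁻ x in h '' E, ρ x ^ 2 ∂μH[2] := by
        rw [lintegral_smul_measure, smul_eq_mul]

theorem exists_disjoint_measurable_cover_subordinate {α : Type*} [TopologicalSpace α]
    [SecondCountableTopology α] [MeasurableSpace α] [OpensMeasurableSpace α] {S : Set α}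
    (hS : MeasurableSet S) (hne : S.Nonempty) {U : α → Set α} (hU : ∀ a ∈ S, U a ∈ 𝓝 a) :
    ∃ E : ℕ → Set α, (∀ i, MeasurableSet (E i)) ∧ Pairwise (Function.onFun Disjoint E) ∧
      ⋃ i, E i = S ∧ ∀ i, ∃ a ∈ S, E i ⊆ U a := by
  obtain ⟨τ, hτS, hτc, hcover⟩ := TopologicalSpace.countable_cover_nhdsWithin
    (s := S) (f := fun x => interior (U x))
    (fun x hx => nhdsWithin_le_nhds (interior_mem_nhds.2 (hU x hx)))
  have hτne : τ.Nonempty := by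
    obtain ⟨x, hx⟩ := hne
    obtain ⟨z, hz, -⟩ := mem_iUnion₂.1 (hcover hx)
    exact ⟨z, hz⟩
  obtain ⟨s, rfl⟩ := hτc.exists_eq_range hτne
  refine ⟨fun i => S ∩ disjointed (fun i => interior (U (s i))) i,
    fun i => hS.inter (MeasurableSet.disjointed (fun i => isOpen_interior.measurableSet) i),
    fun i j hij => (disjoint_disjointed _ hij).mono inter_subset_right inter_subset_right, ?_,
    fun i => ⟨s i, hτS ⟨i, rfl⟩, fun x hx => interior_subset (disjointed_subset _ i hx.2)⟩⟩
  rw [← inter_iUnion, iUnion_disjointed, inter_eq_left]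
  simpa only [biUnion_range] using hcover

theorem LocallyExpandsOn.setLIntegral_comp_le [PolishSpace A]
    {h : A → X} {g : A → ℝ≥0} {C : ℝ≥0} {S : Set A} (hexp : LocallyExpandsOn h g C S)
    (hc : Continuous h) (hS : MeasurableSet S) (hinj : InjOn h S)
    {ρ : X → ℝ≥0∞} (hρ : Measurable ρ) :
    ∫⁻ x in S, (g x * ρ (h x)) ^ 2 ∂(μH[2] : Measure A) ≤
      (C : ℝ≥0∞) ^ 2 * ∫⁻ x, ρ x ^ 2 ∂(μH[2] : Measure X) := by
  rcases S.eq_empty_or_nonempty with rfl | hne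
  · simp
  choose! U hU M hM hMexp using hexp
  obtain ⟨E, hEm, hEd, rfl, hEU⟩ := exists_disjoint_measurable_cover_subordinate hS hne hU
  have hFm : ∀ i, MeasurableSet (h '' E i) := fun i =>
    (hEm i).image_of_continuousOn_injOn hc.continuousOn (hinj.mono (subset_iUnion E i))
  have hFd : Pairwise (Function.onFun Disjoint fun i => h '' E i) := fun i j hij =>
    (hEd hij).image hinj (subset_iUnion E i) (subset_iUnion E j)
  have hpiece : ∀ i, ∫⁻ x in E i, (g x * ρ (h x)) ^ 2 ∂μH[2] ≤
      (C : ℝ≥0∞) ^ 2 * ∫⁻ x in h '' E i, ρ x ^ 2 ∂μH[2] := by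
    intro i
    obtain ⟨a, ha, hEa⟩ := hEU i
    have hEa' : E i ⊆ U a ∩ ⋃ i, E i := subset_inter hEa (subset_iUnion E i)
    exact setLIntegral_comp_le_of_expands hc (hEm i) (fun x hx => hM a ha x (hEa' hx))
      (fun x hx y hy => hMexp a ha x (hEa' hx) y (hEa' hy)) hρ
  calc ∫⁻ x in ⋃ i, E i, (g x * ρ (h x)) ^ 2 ∂μH[2]
      = ∑' i, ∫⁻ x in E i, (g x * ρ (h x)) ^ 2 ∂μH[2] := lintegral_iUnion hEm hEd _
    _ ≤ ∑' i, (C : ℝ≥0∞) ^ 2 * ∫⁻ x in h '' E i, ρ x ^ 2 ∂μH[2] := ENNReal.tsum_le_tsum hpiece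
    _ = (C : ℝ≥0∞) ^ 2 * ∫⁻ x in ⋃ i, h '' E i, ρ x ^ 2 ∂μH[2] := by
        rw [ENNReal.tsum_mul_left, lintegral_iUnion hFm hFd]
    _ ≤ (C : ℝ≥0∞) ^ 2 * ∫⁻ x, ρ x ^ 2 ∂μH[2] := by
        gcongr
        exact Measure.restrict_le_self

/-- An admissible density `ρ` for the image family pulls back to the admissible density
`g * ρ ∘ h`, whose energy is controlled by that of `ρ` since `h` expands where `g ≠ 0`. -/
theorem weaklyQC_of_locallyExpandsOn [PolishSpace A]
    {h : A → X} {g : A → ℝ≥0} (hlip : LocalLipschitzBound h g) (hg : Measurable g)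
    {S : Set A} (hS : MeasurableSet S) {C : ℝ≥0} (hC : C ≠ 0) (hexp : LocallyExpandsOn h g C S)
    (hnull : ∀ᵐ x ∂(μH[2] : Measure A), x ∉ S → g x = 0) (hinj : InjOn h S)
    (hsurj : Function.Surjective h) (hmono : ∀ x, IsPreconnected (h ⁻¹' {x})) :
    WeaklyQC ((C : ℝ) ^ 2) h := by
  have hc : Continuous h := hlip.locallyLipschitz.continuous
  refine ⟨hc, hsurj, hmono, fun Γ => ?_⟩
  have hC0 : (C : ℝ≥0∞) ^ 2 ≠ 0 := by simpa using hC
  rw [ENNReal.ofReal_pow (NNReal.coe_nonneg C), ENNReal.ofReal_coe_nnreal]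
  simp only [modulus, ENNReal.mul_iInf_of_ne hC0 (ENNReal.pow_ne_top ENNReal.coe_ne_top)]
  refine le_iInf₂ fun ρ hρ => iInf₂_le_of_le (fun x => g x * ρ (h x)) ?_ ?_
  · exact ⟨hg.coe_nnreal_ennreal.mul (hρ.1.comp hc.measurable), fun γ hγ hγfin =>
      (hρ.2 _ (mem_image_of_mem _ hγ) (Curve.length_map_ne_top hlip.locallyLipschitz hγfin)).trans
        (Curve.lineIntegral_map_le hlip hγfin ρ)⟩
  · simp only [hausdorff2, lintegral_smul_measure, smul_eq_mul]
    rw [mul_left_comm]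
    gcongr
    refine le_trans (le_of_eq ?_) (hexp.setLIntegral_comp_le hc hS hinj hρ.1)
    rw [← lintegral_indicator hS]
    refine lintegral_congr_ae ?_
    filter_upwards [hnull] with x hx
    by_cases hxS : x ∈ S <;> simp_all

end Expansion

theorem WeaklyQC.comp_homeomorph {A B X : Type*} [MetricSpace A] [MeasurableSpace A] [BorelSpace A]
    [MetricSpace B] [MeasurableSpace B] [BorelSpace B] [MetricSpace X] [MeasurableSpace X]
    [BorelSpace X] {K₁ K₂ : ℝ} {h : B → X} (hh : WeaklyQC K₂ h) {e : A ≃ₜ B}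
    (he : WeaklyQC K₁ e) (hK₁ : 0 ≤ K₁) : WeaklyQC (K₁ * K₂) (h ∘ e) := by
  obtain ⟨hec, -, -, hemod⟩ := he
  obtain ⟨hhc, hsurj, hmono, hhmod⟩ := hh
  refine ⟨hhc.comp hec, hsurj.comp e.surjective, fun x => ?_, fun Γ => ?_⟩
  · rw [preimage_comp, ← e.image_symm]
    exact (hmono x).image _ e.symm.continuous.continuousOn
  · calc modulus Γ ≤ ENNReal.ofReal K₁ * modulus ((fun γ => γ.map e hec) '' Γ) := hemod Γ
      _ ≤ ENNReal.ofReal K₁ * (ENNReal.ofReal K₂ *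
          modulus ((fun γ => γ.map h hhc) '' ((fun γ => γ.map e hec) '' Γ))) := by
        gcongr
        exact hhmod _
      _ = ENNReal.ofReal (K₁ * K₂) *
          modulus ((fun γ => γ.map (h ∘ e) (hhc.comp hec)) '' Γ) := by
        rw [ENNReal.ofReal_mul hK₁, mul_assoc, image_image]
        rfl

/-! ### Conformal maps -/

section Conformal

theorem exists_nhds_dist_le_deriv {f : ℂ → ℂ} {a : ℂ} (hf : AnalyticAt ℂ f a)
    (hfa : deriv f a ≠ 0) {ε : ℝ} (hε : 0 < ε) :
    ∃ V ∈ 𝓝 a, ∀ x ∈ V, ‖deriv f x‖ ≤ (1 + ε) * ‖deriv f a‖ ∧ ∀ y ∈ V,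
      dist (f x) (f y) ≤ (1 + ε) * ‖deriv f a‖ * dist x y ∧
      (1 - ε) * ‖deriv f a‖ * dist x y ≤ dist (f x) (f y) := by
  have hd : 0 < ‖deriv f a‖ := norm_pos_iff.2 hfa
  have hnear : ∀ᶠ z in 𝓝 a, ‖deriv f z‖ < (1 + ε) * ‖deriv f a‖ :=
    hf.deriv.continuousAt.norm.eventually_lt_const (lt_mul_of_one_lt_left hd (by linarith))
  obtain ⟨W, hW, happrox⟩ := hf.hasStrictDerivAt.hasStrictFDerivAt.approximates_deriv_on_nhds
    (c := ⟨ε * ‖deriv f a‖, by positivity⟩) (Or.inr (mul_pos hε hd))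
  refine ⟨_, inter_mem hW hnear, fun x hx => ⟨hx.2.le, fun y hy => ?_⟩⟩
  have hxy : ‖f x - f y - (x - y) * deriv f a‖ ≤ ε * ‖deriv f a‖ * ‖x - y‖ :=
    happrox x hx.1 y hy.1
  have htri := (abs_le.1 ((abs_norm_sub_norm_le _ _).trans hxy))
  rw [norm_mul] at htri
  rw [dist_eq_norm, dist_eq_norm]
  constructor <;> linarith [htri.1, htri.2]

variable {s t : Set ℂ} {e : s ≃ₜ t} {f : ℂ → ℂ}

theorem exists_nhds_dist_homeomorph_le_deriv (hs : IsOpen s) (hf : DifferentiableOn ℂ f s)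
    (hef : ∀ z, (e z : ℂ) = f z) {a : s} (ha : deriv f a ≠ 0) {ε : ℝ} (hε : 0 < ε) :
    ∃ U ∈ 𝓝 a, ∀ x ∈ U, ‖deriv f x‖ ≤ (1 + ε) * ‖deriv f a‖ ∧ ∀ y ∈ U,
      dist (e x) (e y) ≤ (1 + ε) * ‖deriv f a‖ * dist x y ∧
      (1 - ε) * ‖deriv f a‖ * dist x y ≤ dist (e x) (e y) := by
  obtain ⟨V, hV, hdist⟩ := exists_nhds_dist_le_deriv (hf.analyticAt (hs.mem_nhds a.2)) ha hε
  refine ⟨Subtype.val ⁻¹' V, continuous_subtype_val.continuousAt hV, fun x hx =>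
    ⟨(hdist x hx).1, fun y hy => ?_⟩⟩
  simpa only [Subtype.dist_eq, hef] using (hdist x hx).2 y hy

theorem weaklyQC_of_differentiableOn_of_lt_one (hs : IsOpen s) (hf : DifferentiableOn ℂ f s)
    (hef : ∀ z, (e z : ℂ) = f z) (hf' : ∀ z ∈ s, deriv f z ≠ 0) {ε : ℝ} (hε : 0 < ε)
    (hε1 : ε < 1) : WeaklyQC (((1 + ε) ^ 2 / (1 - ε)) ^ 2) e := by
  have hpolish : PolishSpace s := hs.polishSpace
  have hε' : 0 < 1 - ε := sub_pos.2 hε1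
  have hcont : Continuous fun z : s => ‖deriv f z‖ :=
    ((hf.deriv hs).continuousOn.domRestrict).norm
  refine weaklyQC_of_locallyExpandsOn (C := .mk ((1 + ε) ^ 2 / (1 - ε)) (by positivity))
    (h := e) (g := fun z => Real.toNNReal ((1 + ε) * ‖deriv f z‖)) (S := univ) (fun a => ?_)
    (measurable_real_toNNReal.comp (hcont.const_mul _).measurable) MeasurableSet.univ
    (NNReal.coe_ne_zero.1 (by rw [NNReal.coe_mk]; positivity)) (fun a _ => ?_) (by simp)
    e.injective.injOn e.surjective
    fun x => (subsingleton_singleton.preimage e.injective).isPreconnected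
  · obtain ⟨U, hU, hdist⟩ := exists_nhds_dist_homeomorph_le_deriv hs hf hef (hf' a a.2) hε
    exact ⟨U, hU, LipschitzOnWith.of_dist_le_mul fun x hx y hy => by
      rw [Real.coe_toNNReal _ (by positivity)]
      exact ((hdist x hx).2 y hy).1⟩
  · obtain ⟨U, hU, hdist⟩ := exists_nhds_dist_homeomorph_le_deriv hs hf hef (hf' a a.2) hε
    refine ⟨U, hU, .mk ((1 + ε) ^ 2 * ‖deriv f a‖) (by positivity), fun x hx => ?_,
      fun x hx y hy => ?_⟩
    · refine Real.toNNReal_le_iff_le_coe.2 ?_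
      rw [NNReal.coe_mk, sq, mul_assoc]
      gcongr
      exact (hdist x hx.1).1
    · calc (1 + ε) ^ 2 * ‖deriv f a‖ * dist x y
          = (1 + ε) ^ 2 / (1 - ε) * ((1 - ε) * ‖deriv f a‖ * dist x y) := by field_simp
        _ ≤ (1 + ε) ^ 2 / (1 - ε) * dist (e x) (e y) := by
          gcongr
          exact ((hdist x hx.1).2 y hy.1).2

/-- A conformal map is infinitesimally a similarity, so it satisfies the criterion
`weaklyQC_of_locallyExpandsOn` with every constant `C > 1`. -/
theorem weaklyQC_one_of_differentiableOn (hs : IsOpen s) (hf : DifferentiableOn ℂ f s)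
    (hef : ∀ z, (e z : ℂ) = f z) (hf' : ∀ z ∈ s, deriv f z ≠ 0) : WeaklyQC 1 e := by
  refine ⟨e.continuous, e.surjective,
    fun x => (subsingleton_singleton.preimage e.injective).isPreconnected, fun Γ => ?_⟩
  have hlim : Tendsto (fun ε : ℝ => ENNReal.ofReal (((1 + ε) ^ 2 / (1 - ε)) ^ 2)) (𝓝[>] 0)
      (𝓝 (ENNReal.ofReal 1)) := by
    refine ENNReal.tendsto_ofReal (Tendsto.mono_left ?_ nhdsWithin_le_nhds)
    have : ContinuousAt (fun ε : ℝ => ((1 + ε) ^ 2 / (1 - ε)) ^ 2) 0 := by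
      fun_prop (disch := norm_num)
    simpa using this.tendsto
  refine ge_of_tendsto (ENNReal.Tendsto.mul_const hlim (Or.inl (by simp))) ?_
  filter_upwards [Ioo_mem_nhdsGT one_pos] with ε hε
  exact (weaklyQC_of_differentiableOn_of_lt_one hs hf hef hf' hε.1 hε.2).2.2.2 Γ

end Conformal

/-! ### The weight and the slits -/

section Gluing

variable {E : Type*} [PseudoMetricSpace E] {f : ℝ → E} {K : ℝ≥0}

theorem lipschitzOnWith_Iic_of_Icc {a b : ℝ} (hl : LipschitzOnWith K f (Iic a))
    (hr : LipschitzOnWith K f (Icc a b)) : LipschitzOnWith K f (Iic b) := by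
  have hle : ∀ s t, s ≤ t → t ≤ b → dist (f s) (f t) ≤ K * dist s t := by
    intro s t hst htb
    rcases le_total t a with hta | hat
    · exact hl.dist_le_mul s (hst.trans hta) t hta
    rcases le_total a s with has | hsa
    · exact hr.dist_le_mul s ⟨has, hst.trans htb⟩ t ⟨hat, htb⟩
    calc dist (f s) (f t) ≤ dist (f s) (f a) + dist (f a) (f t) := dist_triangle _ _ _
      _ ≤ K * dist s a + K * dist a t :=
          add_le_add (hl.dist_le_mul s hsa a self_mem_Iic)
            (hr.dist_le_mul a ⟨le_rfl, hat.trans htb⟩ t ⟨hat, htb⟩)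
      _ = K * dist s t := by
          rw [← mul_add, Real.dist_eq, Real.dist_eq, Real.dist_eq, abs_of_nonpos (by linarith),
            abs_of_nonpos (by linarith), abs_of_nonpos (by linarith)]
          ring
  refine LipschitzOnWith.of_dist_le_mul fun s hs t ht => ?_
  rcases le_total s t with hst | hts
  · exact hle s t hst ht
  · rw [dist_comm, dist_comm s]
    exact hle t s hts hs

theorem lipschitzOnWith_Iic_natCast (h0 : LipschitzOnWith K f (Iic 0)) {N : ℕ}
    (h : ∀ n < N, LipschitzOnWith K f (Icc (n : ℝ) (n + 1))) :
    LipschitzOnWith K f (Iic (N : ℝ)) := by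
  induction N with
  | zero => simpa using h0
  | succ N ih =>
    rw [Nat.cast_succ]
    exact lipschitzOnWith_Iic_of_Icc (ih fun n hn => h n (hn.trans N.lt_succ_self))
      (h N N.lt_succ_self)

theorem lipschitzWith_of_Icc_natCast (h0 : LipschitzOnWith K f (Iic 0))
    (h : ∀ n : ℕ, LipschitzOnWith K f (Icc (n : ℝ) (n + 1))) : LipschitzWith K f := by
  intro s t
  obtain ⟨N, hN⟩ := exists_nat_ge (max s t)
  exact lipschitzOnWith_Iic_natCast h0 (fun n _ => h n) ((le_max_left _ _).trans hN)
    ((le_max_right _ _).trans hN)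

end Gluing

/-- The distance from a real number to the nearest integer. -/
noncomputable def distInt (x : ℝ) : ℝ := |x - round x|

theorem distInt_nonneg (x : ℝ) : 0 ≤ distInt x := abs_nonneg _

theorem distInt_le_half (x : ℝ) : distInt x ≤ 1 / 2 := abs_sub_round x

theorem distInt_intCast (n : ℤ) : distInt n = 0 := by simp [distInt]

theorem lipschitzWith_distInt : LipschitzWith 1 distInt :=
  LipschitzWith.of_le_add fun x y => by
    rw [add_comm, Real.dist_eq]
    exact (round_le x (round y)).trans (abs_sub_le x y (round y))

theorem distInt_two_mul_le (x : ℝ) : distInt (2 * x) ≤ 1 - 2 * distInt x := by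
  have hx := abs_le.1 (abs_sub_round x)
  rcases abs_cases (x - round x) with ⟨habs, -⟩ | ⟨habs, -⟩
  · have hround := round_le (2 * x) (2 * round x + 1)
    push_cast at hround
    rw [abs_of_nonpos (a := 2 * x - (2 * round x + 1)) (by linarith)] at hround
    rw [distInt, distInt, habs]
    linarith
  · have hround := round_le (2 * x) (2 * round x - 1)
    push_cast at hround
    rw [abs_of_nonneg (a := 2 * x - (2 * round x - 1)) (by linarith)] at hround
    rw [distInt, distInt, habs]
    linarith

/-- The logarithmic weight: `-log` of the conformal factor at height `t`. On the band
`n ≤ t ≤ n + 1` it is a tent of height `2 ^ n / 2` vanishing at both ends. -/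
noncomputable def weightExponent (t : ℝ) : ℝ := 2 ^ ⌊t⌋₊ * distInt (max t 0)

theorem weightExponent_nonneg (t : ℝ) : 0 ≤ weightExponent t :=
  mul_nonneg (by positivity) (distInt_nonneg _)

theorem weightExponent_of_nonpos {t : ℝ} (ht : t ≤ 0) : weightExponent t = 0 := by
  have hzero : distInt 0 = 0 := by exact_mod_cast distInt_intCast 0
  rw [weightExponent, max_eq_right ht, hzero, mul_zero]

theorem weightExponent_natCast (n : ℕ) : weightExponent n = 0 := by
  rw [weightExponent, max_eq_left n.cast_nonneg, ← Int.cast_natCast, distInt_intCast, mul_zero]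

theorem weightExponent_eq {n : ℕ} {t : ℝ} (ht : t ∈ Icc (n : ℝ) (n + 1)) :
    weightExponent t = 2 ^ n * distInt t := by
  have ht0 : 0 ≤ t := n.cast_nonneg.trans ht.1
  rcases ht.2.lt_or_eq with hlt | rfl
  · rw [weightExponent, (Nat.floor_eq_iff ht0).2 ⟨ht.1, hlt⟩, max_eq_left ht0]
  · have hint : distInt ((n : ℝ) + 1) = 0 := by exact_mod_cast distInt_intCast (n + 1)
    rw [← Nat.cast_succ, weightExponent_natCast, Nat.cast_succ, hint, mul_zero]

theorem weightExponent_le {N : ℕ} {t : ℝ} (ht : t ≤ N) : weightExponent t ≤ 2 ^ N := by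
  refine (mul_le_mul (pow_le_pow_right₀ one_le_two (Nat.floor_le_of_le ht))
    ((distInt_le_half _).trans (by norm_num)) (distInt_nonneg _) (by positivity)).trans_eq
    (mul_one _)

theorem lipschitzOnWith_weightExponent (n : ℕ) :
    LipschitzOnWith (2 ^ n) weightExponent (Icc (n : ℝ) (n + 1)) := by
  refine LipschitzOnWith.of_dist_le_mul fun s hs t ht => ?_
  rw [weightExponent_eq hs, weightExponent_eq ht, Real.dist_eq, ← mul_sub, abs_mul, abs_pow,
    Nat.abs_ofNat, NNReal.coe_pow, NNReal.coe_ofNat]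
  have hdist := lipschitzWith_distInt.dist_le_mul s t
  rw [NNReal.coe_one, one_mul, Real.dist_eq] at hdist
  gcongr

theorem continuous_weightExponent : Continuous weightExponent := by
  refine continuous_iff_continuousAt.2 fun t => ?_
  obtain ⟨N, hN⟩ := exists_nat_gt t
  have hzero : LipschitzOnWith (2 ^ N) weightExponent (Iic 0) :=
    LipschitzOnWith.of_dist_le_mul fun s hs u hu => by
      rw [weightExponent_of_nonpos hs, weightExponent_of_nonpos hu, dist_self]
      positivity
  have hlip : LipschitzOnWith (2 ^ N) weightExponent (Iic (N : ℝ)) :=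
    lipschitzOnWith_Iic_natCast hzero fun n hn =>
      (lipschitzOnWith_weightExponent n).weaken (pow_le_pow_right₀ one_le_two hn.le)
  exact hlip.continuousOn.continuousAt (Iic_mem_nhds hN)

/-- The conformal factor of the surface at height `t` of the slit plane. It equals `1` at each
slit end, i.e. at each natural number, and its integral over `[0, ∞)` is finite. -/
noncomputable def weight (t : ℝ) : ℝ := Real.exp (-weightExponent t)

theorem weight_pos (t : ℝ) : 0 < weight t := Real.exp_pos _

theorem weight_le_one (t : ℝ) : weight t ≤ 1 :=
  Real.exp_le_one_iff.2 (neg_nonpos.2 (weightExponent_nonneg t))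

theorem weight_of_nonpos {t : ℝ} (ht : t ≤ 0) : weight t = 1 := by
  rw [weight, weightExponent_of_nonpos ht, neg_zero, Real.exp_zero]

theorem weight_natCast (n : ℕ) : weight n = 1 := by
  rw [weight, weightExponent_natCast, neg_zero, Real.exp_zero]

theorem exp_neg_two_pow_le_weight {N : ℕ} {t : ℝ} (ht : t ≤ N) :
    Real.exp (-2 ^ N) ≤ weight t :=
  Real.exp_le_exp.2 (neg_le_neg (weightExponent_le ht))

theorem continuous_weight : Continuous weight :=
  Real.continuous_exp.comp continuous_weightExponent.neg

theorem exists_forall_ball_weight_mem (t : ℝ) :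
    ∃ ε > 0, ∀ s ∈ ball t ε, weight t / 2 ≤ weight s ∧ weight s ≤ 2 * weight t := by
  have ht := weight_pos t
  have hnear : ∀ᶠ s in 𝓝 t, weight t / 2 < weight s ∧ weight s < 2 * weight t :=
    (continuous_weight.continuousAt.eventually_const_lt (by linarith)).and
      (continuous_weight.continuousAt.eventually_lt_const (by linarith))
  obtain ⟨ε, hε, h⟩ := Metric.eventually_nhds_iff_ball.1 hnear
  exact ⟨ε, hε, fun s hs => ⟨(h s hs).1.le, (h s hs).2.le⟩⟩

/-- The distance from `2 ^ j * x` to the nearest half-integer. Its zeros are the abscissas of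
the slits of the `j`-th band. -/
noncomputable def slitDist (j : ℕ) (x : ℝ) : ℝ := 1 / 2 - distInt (2 ^ j * x)

theorem slitDist_nonneg (j : ℕ) (x : ℝ) : 0 ≤ slitDist j x :=
  sub_nonneg.2 (distInt_le_half _)

theorem slitDist_le_one (j : ℕ) (x : ℝ) : slitDist j x ≤ 1 := by
  rw [slitDist]
  linarith [distInt_nonneg (2 ^ j * x)]

theorem lipschitzWith_slitDist (j : ℕ) : LipschitzWith (2 ^ j) (slitDist j) :=
  LipschitzWith.of_dist_le_mul fun x y => by
    refine (dist_sub_left _ _ _).trans_le ((lipschitzWith_distInt.dist_le_mul _ _).trans_eq ?_)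
    rw [Real.dist_eq, ← mul_sub, abs_mul, abs_pow, Nat.abs_ofNat, Real.dist_eq]
    push_cast
    ring

/-- Halving the spacing separates the half-integers from each other. -/
theorem one_fourth_le_slitDist_add_succ (j : ℕ) (x : ℝ) :
    1 / 4 ≤ slitDist j x + slitDist (j + 1) x := by
  have hdouble := distInt_two_mul_le (2 ^ j * x)
  rw [← mul_assoc, ← pow_succ'] at hdouble
  have hj' := slitDist_nonneg (j + 1) x
  unfold slitDist at *
  linarith

/-- Truncation of a real number to the unit interval. -/
def unitClamp (s : ℝ) : ℝ := max 0 (min s 1)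

theorem unitClamp_nonneg (s : ℝ) : 0 ≤ unitClamp s := le_max_left _ _

theorem unitClamp_le_one (s : ℝ) : unitClamp s ≤ 1 := max_le zero_le_one (min_le_right _ _)

theorem monotone_unitClamp : Monotone unitClamp :=
  fun _ _ h => max_le_max le_rfl (min_le_min h le_rfl)

theorem unitClamp_of_nonpos {s : ℝ} (hs : s ≤ 0) : unitClamp s = 0 :=
  max_eq_left ((min_le_left _ _).trans hs)

theorem unitClamp_of_one_le {s : ℝ} (hs : 1 ≤ s) : unitClamp s = 1 := by
  rw [unitClamp, min_eq_right hs, max_eq_right zero_le_one]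

theorem unitClamp_lt_unitClamp {s t : ℝ} (hst : s < t) (hs : s < 1) (ht : 0 < t) :
    unitClamp s < unitClamp t :=
  max_lt (lt_max_of_lt_right (lt_min ht one_pos))
    (lt_max_of_lt_right (by rw [min_eq_left hs.le]; exact lt_min hst hs))

theorem lipschitzWith_unitClamp : LipschitzWith 1 unitClamp :=
  (LipschitzWith.id.min_const 1).const_max 0

/-- The height function of the folding map, with the contribution of the bands `N, N + 1, …`
omitted. It agrees with `height` below the line `y = N` and is globally Lipschitz. -/
noncomputable def partialHeight (N : ℕ) (x y : ℝ) : ℝ :=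
  min y 0 + ∑ j ∈ Finset.range N, slitDist j x * unitClamp (y - j)

/-- The second coordinate of the folding map. On the band `j ≤ y ≤ j + 1` it grows with
vertical speed `slitDist j x`, so that it is constant exactly on the slits. -/
noncomputable def height (x y : ℝ) : ℝ := partialHeight ⌈y⌉₊ x y

theorem height_eq {N : ℕ} (x : ℝ) {y : ℝ} (hy : y ≤ N) : height x y = partialHeight N x y := by
  refine congrArg (min y 0 + ·) (Finset.sum_subset
    (Finset.range_subset_range.2 (Nat.ceil_le.2 hy)) fun j _ hj => ?_)
  rw [Finset.mem_range, not_lt, Nat.ceil_le] at hj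
  rw [unitClamp_of_nonpos (sub_nonpos.2 hj), mul_zero]

theorem monotone_partialHeight (N : ℕ) (x : ℝ) : Monotone (partialHeight N x) :=
  fun _ _ h => add_le_add (min_le_min h le_rfl) (Finset.sum_le_sum fun j _ =>
    mul_le_mul_of_nonneg_left (monotone_unitClamp (sub_le_sub_right h _)) (slitDist_nonneg j x))

theorem monotone_height (x : ℝ) : Monotone (height x) := by
  intro y y' h
  obtain ⟨N, hN⟩ := exists_nat_ge y'
  rw [height_eq x hN, height_eq x (h.trans hN)]
  exact monotone_partialHeight N x h

theorem height_of_nonpos {x y : ℝ} (hy : y ≤ 0) : height x y = y := by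
  rw [height_eq (N := 0) x (by simpa using hy), partialHeight, Finset.sum_range_zero, add_zero,
    min_eq_left hy]

theorem height_eq_height_natCast {x y : ℝ} {j : ℕ} (hx : slitDist j x = 0)
    (hy : y ∈ Icc (j : ℝ) (j + 1)) : height x y = height x j := by
  rw [height_eq (N := j + 1) x (by push_cast; exact hy.2),
    height_eq (N := j + 1) x (by push_cast; linarith), partialHeight, partialHeight,
    min_eq_right (j.cast_nonneg.trans hy.1), min_eq_right j.cast_nonneg,
    Finset.sum_range_succ, Finset.sum_range_succ, hx, zero_mul, zero_mul]
  refine congrArg (fun t : ℝ => 0 + (t + 0)) (Finset.sum_congr rfl fun i hi => ?_)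
  have hij : (i : ℝ) + 1 ≤ j := by exact_mod_cast Finset.mem_range.1 hi
  rw [unitClamp_of_one_le (by linarith [hy.1]), unitClamp_of_one_le (by linarith)]

theorem partialHeight_congr {N : ℕ} {x y y' : ℝ} (hle : y ≤ y')
    (heq : partialHeight N x y = partialHeight N x y') :
    min y 0 = min y' 0 ∧
      ∀ j < N, slitDist j x * unitClamp (y - j) = slitDist j x * unitClamp (y' - j) := by
  have hterm : ∀ j ∈ Finset.range N,
      slitDist j x * unitClamp (y - j) ≤ slitDist j x * unitClamp (y' - j) := fun j _ =>
    mul_le_mul_of_nonneg_left (monotone_unitClamp (sub_le_sub_right hle _)) (slitDist_nonneg j x)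
  have hparts := (add_eq_add_iff_eq_and_eq (min_le_min hle le_rfl)
    (Finset.sum_le_sum hterm)).1 heq
  exact ⟨hparts.1, fun j hj =>
    (Finset.sum_eq_sum_iff_of_le hterm).1 hparts.2 j (Finset.mem_range.2 hj)⟩

theorem slitDist_eq_zero_of_height_eq {x y y' : ℝ} {j : ℕ} (hlt : y < y')
    (heq : height x y = height x y') (hy : y < j + 1) (hy' : j < y') : slitDist j x = 0 := by
  obtain ⟨N, hN⟩ := exists_nat_ge y'
  have hjN : j < N := by exact_mod_cast hy'.trans_le hN
  rw [height_eq x hN, height_eq x (hlt.le.trans hN)] at heq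
  have hprod := (partialHeight_congr hlt.le heq).2 j hjN
  have hclamp : unitClamp (y - j) < unitClamp (y' - j) :=
    unitClamp_lt_unitClamp (by linarith) (by linarith) (by linarith)
  exact (mul_eq_mul_left_iff.1 hprod).resolve_left hclamp.ne

theorem nonneg_of_height_eq {x y y' : ℝ} (hlt : y < y') (heq : height x y = height x y') :
    0 ≤ y := by
  obtain ⟨N, hN⟩ := exists_nat_ge y'
  rw [height_eq x hN, height_eq x (hlt.le.trans hN)] at heq
  by_contra! hy
  have hmin : min y 0 < min y' 0 := by
    rw [min_eq_left hy.le]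
    exact lt_min hlt hy
  exact hmin.ne (partialHeight_congr hlt.le heq).1

/-- The union of the vertical slits. Those of the `j`-th band have unit length, occupy the
heights `j ≤ y ≤ j + 1` and are `1 / 2 ^ j` apart. -/
def slits : Set ℂ := {z | ∃ j : ℕ, slitDist j z.re = 0 ∧ z.im ∈ Icc (j : ℝ) (j + 1)}

theorem mem_slits_left_of_height_eq {x y y' : ℝ} (hlt : y < y')
    (heq : height x y = height x y') : (⟨x, y⟩ : ℂ) ∈ slits := by
  have hfloor := Nat.floor_le (nonneg_of_height_eq hlt heq)
  have hfloor' := Nat.lt_floor_add_one y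
  exact ⟨⌊y⌋₊, slitDist_eq_zero_of_height_eq hlt heq hfloor' (hfloor.trans_lt hlt), hfloor,
    hfloor'.le⟩

theorem mem_slits_right_of_height_eq {x y y' : ℝ} (hlt : y < y')
    (heq : height x y = height x y') : (⟨x, y'⟩ : ℂ) ∈ slits := by
  have hpos : 0 < y' := (nonneg_of_height_eq hlt heq).trans_lt hlt
  obtain ⟨m, hm⟩ := Nat.exists_eq_succ_of_ne_zero (Nat.ceil_pos.2 hpos).ne'
  have hceil := Nat.le_ceil y'
  have hceil' := Nat.ceil_lt_add_one hpos.le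
  rw [hm, Nat.cast_succ] at hceil hceil'
  have hmy : (m : ℝ) < y' := by linarith
  exact ⟨m, slitDist_eq_zero_of_height_eq hlt heq (hlt.trans_le hceil) hmy, hmy.le, hceil⟩

theorem isClosed_slits : IsClosed slits := by
  have hunion : slits =
      ⋃ j : ℕ, {z : ℂ | slitDist j z.re = 0} ∩ Complex.im ⁻¹' Icc (j : ℝ) (j + 1) := by
    ext z
    simp [slits]
  rw [hunion]
  refine LocallyFinite.isClosed_iUnion (fun z => ?_) fun j =>
    (isClosed_eq ((lipschitzWith_slitDist j).continuous.comp Complex.continuous_re)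
      continuous_const).inter (isClosed_Icc.preimage Complex.continuous_im)
  obtain ⟨N, hN⟩ := exists_nat_gt z.im
  refine ⟨{u | u.im < N}, (isOpen_lt Complex.continuous_im continuous_const).mem_nhds hN,
    (Set.finite_lt_nat N).subset ?_⟩
  rintro j ⟨u, ⟨-, hju⟩, huN⟩
  exact Nat.cast_lt.1 (lt_of_le_of_lt hju.1 huN)

/-- The folding map collapses each slit to a point and is injective elsewhere. -/
noncomputable def fold (z : ℂ) : ℂ := ⟨z.re, height z.re z.im⟩

/-- The globally Lipschitz map which agrees with `fold` below height `N`. -/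
noncomputable def partialFold (N : ℕ) (z : ℂ) : ℂ := ⟨z.re, partialHeight N z.re z.im⟩

theorem eq_of_fold_eq {p q : ℂ} (hp : p ∉ slits) (h : fold p = fold q) : p = q := by
  have hre : (fold p).re = (fold q).re := congrArg Complex.re h
  change p.re = q.re at hre
  have him : height p.re p.im = height p.re q.im := by
    simpa only [fold, hre] using congrArg Complex.im h
  refine Complex.ext hre ((lt_trichotomy p.im q.im).resolve_left
    (fun hlt => hp (mem_slits_left_of_height_eq hlt him)) |>.resolve_right
    fun hlt => hp (mem_slits_right_of_height_eq hlt him.symm))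

theorem fold_eq {N : ℕ} {z : ℂ} (hz : z.im ≤ N) : fold z = partialFold N z :=
  Complex.ext rfl (height_eq z.re hz)

theorem lipschitzWith_re : LipschitzWith 1 Complex.re :=
  LipschitzWith.of_dist_le_mul fun p q => by
    simpa [dist_eq_norm] using Complex.abs_re_le_norm (p - q)

theorem lipschitzWith_im : LipschitzWith 1 Complex.im :=
  LipschitzWith.of_dist_le_mul fun p q => by
    simpa [dist_eq_norm] using Complex.abs_im_le_norm (p - q)

theorem dist_le_dist_re_add_dist_im (p q : ℂ) :
    dist p q ≤ dist p.re q.re + dist p.im q.im := by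
  simpa [dist_eq_norm] using Complex.norm_le_abs_re_add_abs_im (p - q)

theorem lipschitzWith_slitDist_mul_unitClamp (j : ℕ) :
    LipschitzWith (2 ^ j + 1) fun z : ℂ => slitDist j z.re * unitClamp (z.im - j) := by
  refine LipschitzWith.of_dist_le_mul fun p q => ?_
  have hslit : dist (slitDist j p.re) (slitDist j q.re) ≤ 2 ^ j * dist p q := by
    simpa using ((lipschitzWith_slitDist j).comp lipschitzWith_re).dist_le_mul p q
  have hclamp : dist (unitClamp (p.im - j)) (unitClamp (q.im - j)) ≤ dist p q := by
    simpa using (lipschitzWith_unitClamp.dist_le_mul (p.im - j) (q.im - j)).trans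
      (by simpa using lipschitzWith_im.dist_le_mul p q)
  calc dist (slitDist j p.re * unitClamp (p.im - j)) (slitDist j q.re * unitClamp (q.im - j))
      ≤ dist (slitDist j p.re * unitClamp (p.im - j)) (slitDist j q.re * unitClamp (p.im - j)) +
        dist (slitDist j q.re * unitClamp (p.im - j)) (slitDist j q.re * unitClamp (q.im - j)) :=
        dist_triangle _ _ _
    _ = dist (slitDist j p.re) (slitDist j q.re) * unitClamp (p.im - j) +
        slitDist j q.re * dist (unitClamp (p.im - j)) (unitClamp (q.im - j)) := by
        rw [Real.dist_eq, Real.dist_eq, Real.dist_eq, Real.dist_eq, ← sub_mul, ← mul_sub, abs_mul,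
          abs_mul, abs_of_nonneg (unitClamp_nonneg _), abs_of_nonneg (slitDist_nonneg _ _)]
    _ ≤ 2 ^ j * dist p q * 1 + 1 * dist p q :=
        add_le_add (mul_le_mul hslit (unitClamp_le_one _) (unitClamp_nonneg _) (by positivity))
          (mul_le_mul (slitDist_le_one _ _) hclamp dist_nonneg zero_le_one)
    _ = ((2 ^ j + 1 : ℝ≥0) : ℝ) * dist p q := by
        push_cast
        ring

theorem exists_lipschitzWith_partialHeight (N : ℕ) :
    ∃ C, LipschitzWith C fun z : ℂ => partialHeight N z.re z.im := by
  induction N with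
  | zero => exact ⟨1, by simpa [partialHeight] using lipschitzWith_im.min_const 0⟩
  | succ N ih =>
    obtain ⟨C, hC⟩ := ih
    refine ⟨C + (2 ^ N + 1), ?_⟩
    simpa only [partialHeight, Finset.sum_range_succ, add_assoc]
      using hC.add (lipschitzWith_slitDist_mul_unitClamp N)

theorem exists_lipschitzWith_partialFold (N : ℕ) : ∃ C, LipschitzWith C (partialFold N) := by
  obtain ⟨C, hC⟩ := exists_lipschitzWith_partialHeight N
  refine ⟨1 + C, LipschitzWith.of_dist_le_mul fun p q => ?_⟩
  calc dist (partialFold N p) (partialFold N q)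
      ≤ dist p.re q.re + dist (partialHeight N p.re p.im) (partialHeight N q.re q.im) :=
        dist_le_dist_re_add_dist_im _ _
    _ ≤ (1 : ℝ≥0) * dist p q + C * dist p q :=
        add_le_add (lipschitzWith_re.dist_le_mul p q) (hC.dist_le_mul p q)
    _ = ((1 + C : ℝ≥0) : ℝ) * dist p q := by
        push_cast
        ring

theorem continuous_fold : Continuous fold := by
  refine continuous_iff_continuousAt.2 fun p => ?_
  obtain ⟨N, hN⟩ := exists_nat_gt p.im
  obtain ⟨C, hC⟩ := exists_lipschitzWith_partialFold N
  refine hC.continuous.continuousAt.congr ?_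
  filter_upwards [(isOpen_lt Complex.continuous_im continuous_const).mem_nhds hN] with z hz
  exact (fold_eq (le_of_lt hz)).symm

theorem continuous_height (x : ℝ) : Continuous (height x) :=
  Complex.continuous_im.comp (continuous_fold.comp
    (Complex.equivRealProdCLM.symm.continuous.comp (Continuous.prodMk_right x)))

/-- Consecutive bands together contribute at least `1 / 4`. -/
theorem div_four_le_height (x : ℝ) (m : ℕ) : (m : ℝ) / 4 ≤ height x (2 * m) := by
  have hfull : ∀ j ∈ Finset.range (2 * m),
      slitDist j x * unitClamp (2 * m - j) = slitDist j x := by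
    intro j hj
    have hjm : (j : ℝ) + 1 ≤ 2 * m := by exact_mod_cast Finset.mem_range.1 hj
    rw [unitClamp_of_one_le (by linarith), mul_one]
  rw [height_eq (N := 2 * m) x (by push_cast; rfl), partialHeight, min_eq_right (by positivity),
    zero_add, Finset.sum_congr rfl hfull]
  clear hfull
  induction m with
  | zero => simp
  | succ m ih =>
    rw [show 2 * (m + 1) = 2 * m + 1 + 1 by ring, Finset.sum_range_succ, Finset.sum_range_succ]
    have hpair := one_fourth_le_slitDist_add_succ (2 * m) x
    push_cast
    linarith

theorem exists_forall_lt_height (R : ℝ) : ∃ N : ℕ, ∀ x y : ℝ, N ≤ y → R < height x y := by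
  obtain ⟨m, hm⟩ := exists_nat_gt (4 * R)
  refine ⟨2 * m, fun x y hy => ?_⟩
  have hmono := monotone_height x (by exact_mod_cast hy : (2 * m : ℝ) ≤ y)
  linarith [div_four_le_height x m]

theorem surjective_fold : Function.Surjective fold := by
  intro b
  obtain ⟨N, hN⟩ := exists_forall_lt_height b.im
  have hlow : height b.re (min b.im 0) ≤ b.im :=
    (height_of_nonpos (min_le_right _ _)).trans_le (min_le_left _ _)
  have hle : min b.im 0 ≤ N := (min_le_right _ _).trans N.cast_nonneg
  obtain ⟨y, -, hy⟩ := intermediate_value_Icc hle (continuous_height b.re).continuousOn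
    ⟨hlow, (hN b.re N le_rfl).le⟩
  exact ⟨⟨b.re, y⟩, Complex.ext rfl hy⟩

theorem isProperMap_fold : IsProperMap fold := by
  refine isProperMap_iff_isCompact_preimage.2 ⟨continuous_fold, fun K hK => ?_⟩
  obtain ⟨R, hR⟩ := hK.isBounded.exists_norm_le
  obtain ⟨N, hN⟩ := exists_forall_lt_height R
  refine ((isCompact_Icc (a := -R) (b := R)).reProdIm
    (isCompact_Icc (a := -R) (b := (N : ℝ)))).of_isClosed_subset
    (hK.isClosed.preimage continuous_fold) fun z hz => ?_
  have hre : |z.re| ≤ R := (Complex.abs_re_le_norm (fold z)).trans (hR _ hz)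
  have him : |height z.re z.im| ≤ R := (Complex.abs_im_le_norm (fold z)).trans (hR _ hz)
  refine Complex.mem_reProdIm.2 ⟨abs_le.1 hre, ?_, ?_⟩
  · rcases le_total z.im 0 with hneg | hpos
    · exact (height_of_nonpos hneg).symm ▸ (abs_le.1 him).1
    · linarith [abs_nonneg z.re]
  · by_contra! hlt
    exact (hN z.re z.im hlt.le).not_ge ((le_abs_self _).trans him)

theorem isQuotientMap_fold : Topology.IsQuotientMap fold :=
  isProperMap_fold.isClosedMap.isQuotientMap continuous_fold surjective_fold

/-! ### The folded plane -/

/-- `ψ` is `1`-Lipschitz with respect to the length element `weight y * √(dx ^ 2 + dy ^ 2)`,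
tested on segments. -/
def IsWeightLipschitz (ψ : ℂ → ℝ) : Prop :=
  ∀ p q : ℂ, ∀ L : ℝ, (∀ y ∈ uIcc p.im q.im, weight y ≤ L) → dist (ψ p) (ψ q) ≤ L * dist p q

theorem isWeightLipschitz_of_lipschitzWith {ψ : ℂ → ℝ} {m : ℝ≥0} (hψ : LipschitzWith m ψ)
    (hm : ∀ z, ψ z ≠ 0 → m ≤ weight z.im) : IsWeightLipschitz ψ := by
  intro p q L hL
  by_cases hpq : ψ p = 0 ∧ ψ q = 0
  · rw [hpq.1, hpq.2, dist_self]
    exact mul_nonneg ((weight_pos _).le.trans (hL _ left_mem_uIcc)) dist_nonneg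
  have hmL : m ≤ L := by
    rcases not_and_or.1 hpq with hp | hq
    · exact (hm p hp).trans (hL _ left_mem_uIcc)
    · exact (hm q hq).trans (hL _ right_mem_uIcc)
  exact (hψ.dist_le_mul p q).trans (mul_le_mul_of_nonneg_right hmL dist_nonneg)

/-- The function with graph a cone of slope `1`, apex at `a` and height `r`. -/
noncomputable def cone (r : ℝ) (a z : ℂ) : ℝ := max 0 (r - dist z a)

theorem lipschitzWith_cone (r : ℝ) (a : ℂ) : LipschitzWith 1 (cone r a) :=
  (LipschitzWith.of_dist_le_mul fun x y => by
    rw [NNReal.coe_one, one_mul, dist_sub_left]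
    exact dist_dist_dist_le_left x y a).const_max 0

theorem cone_of_le {r : ℝ} {a z : ℂ} (h : r ≤ dist z a) : cone r a z = 0 :=
  max_eq_left (sub_nonpos.2 h)

theorem dist_cone_cone_self {r : ℝ} (hr : 0 ≤ r) (a z : ℂ) :
    dist (cone r a z) (cone r a a) = min r (dist z a) := by
  have hapex : cone r a a = r := by rw [cone, dist_self, sub_zero, max_eq_right hr]
  rw [dist_comm, hapex, Real.dist_eq]
  rcases le_total r (dist z a) with h | h
  · rw [cone_of_le h, sub_zero, abs_of_nonneg hr, min_eq_left h]
  · rw [cone, max_eq_right (sub_nonneg.2 h), sub_sub_cancel, abs_of_nonneg dist_nonneg,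
      min_eq_right h]

/-- The largest metric on the folded plane for which `fold` is `1`-Lipschitz with respect to
the length element `weight y * √(dx ^ 2 + dy ^ 2)`, in its dual description by `1`-Lipschitz
functions. -/
noncomputable def foldDist (a b : ℂ) : ℝ :=
  ⨆ φ : {φ : ℂ → ℝ // IsWeightLipschitz (φ ∘ fold)}, dist (φ.1 a) (φ.1 b)

theorem isWeightLipschitz_zero : IsWeightLipschitz 0 :=
  isWeightLipschitz_of_lipschitzWith (m := 0) (LipschitzWith.const 0) fun _ h => absurd rfl h

instance : Nonempty {φ : ℂ → ℝ // IsWeightLipschitz (φ ∘ fold)} := ⟨⟨0, isWeightLipschitz_zero⟩⟩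

theorem dist_le_foldDist {φ : ℂ → ℝ} (hφ : IsWeightLipschitz (φ ∘ fold)) (a b : ℂ) :
    dist (φ a) (φ b) ≤ foldDist a b := by
  refine le_ciSup (f := fun φ : {φ : ℂ → ℝ // IsWeightLipschitz (φ ∘ fold)} =>
    dist (φ.1 a) (φ.1 b)) ?_ ⟨φ, hφ⟩
  obtain ⟨p, rfl⟩ := surjective_fold a
  obtain ⟨q, rfl⟩ := surjective_fold b
  refine ⟨1 * dist p q, ?_⟩
  rintro _ ⟨φ, rfl⟩
  exact φ.2 p q 1 fun y _ => weight_le_one y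

theorem foldDist_fold_le {p q : ℂ} {L : ℝ} (hL : ∀ y ∈ uIcc p.im q.im, weight y ≤ L) :
    foldDist (fold p) (fold q) ≤ L * dist p q :=
  ciSup_le fun φ => φ.2 p q L hL

theorem exists_cone_comp_fold_eq (a : ℂ) :
    ∃ N, cone 1 a ∘ fold = cone 1 a ∘ partialFold N ∧ ∀ z, cone 1 a (fold z) ≠ 0 → z.im ≤ N := by
  obtain ⟨N, hN⟩ := exists_forall_lt_height (a.im + 1)
  have hzero : ∀ z : ℂ, a.im + 1 ≤ z.im → cone 1 a z = 0 := fun z hz => cone_of_le <| by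
    have him := Complex.abs_im_le_norm (z - a)
    rw [Complex.sub_im, ← dist_eq_norm] at him
    linarith [le_abs_self (z.im - a.im)]
  refine ⟨N, funext fun z => ?_, fun z hz => ?_⟩
  · rcases le_total z.im N with hz | hz
    · exact congrArg (cone 1 a) (fold_eq hz)
    · have hpartial : a.im + 1 ≤ (partialFold N z).im :=
        (hN z.re N le_rfl).le.trans
          ((height_eq z.re le_rfl).trans_le (monotone_partialHeight N z.re hz))
      exact (hzero (fold z) (hN z.re z.im hz).le).trans (hzero _ hpartial).symm
  · by_contra! hlt
    exact hz (hzero _ (hN z.re z.im hlt.le).le)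

theorem exists_mul_min_le_foldDist (a : ℂ) :
    ∃ c > 0, ∀ b, c * min 1 (dist b a) ≤ foldDist b a := by
  obtain ⟨N, heq, hN⟩ := exists_cone_comp_fold_eq a
  obtain ⟨C, hC⟩ := exists_lipschitzWith_partialFold N
  have hcone : LipschitzWith (C + 1) (cone 1 a ∘ fold) := by
    rw [heq]
    exact ((lipschitzWith_cone 1 a).comp hC).weaken (by simp)
  set m : ℝ≥0 := NNReal.mk (Real.exp (-2 ^ N)) (Real.exp_pos _).le
  have hm : 0 < m := Real.exp_pos _
  set c : ℝ≥0 := m / (C + 1)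
  have hlip : LipschitzWith m ((fun b => (c : ℝ) * cone 1 a b) ∘ fold) := by
    refine LipschitzWith.of_dist_le_mul fun p q => ?_
    calc dist ((c : ℝ) * cone 1 a (fold p)) (c * cone 1 a (fold q))
        = c * dist (cone 1 a (fold p)) (cone 1 a (fold q)) := by
          rw [Real.dist_eq, Real.dist_eq, ← mul_sub, abs_mul, NNReal.abs_eq]
      _ ≤ c * ((C + 1 : ℝ≥0) * dist p q) :=
          mul_le_mul_of_nonneg_left (hcone.dist_le_mul p q) c.2
      _ = m * dist p q := by
          rw [← mul_assoc, ← NNReal.coe_mul, div_mul_cancel₀ _ (by positivity)]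
  have hadm := isWeightLipschitz_of_lipschitzWith hlip fun z hz =>
    exp_neg_two_pow_le_weight (hN z (right_ne_zero_of_mul hz))
  refine ⟨c, by positivity, fun b => (le_of_eq ?_).trans (dist_le_foldDist hadm b a)⟩
  rw [← dist_cone_cone_self zero_le_one, Real.dist_eq, Real.dist_eq, ← mul_sub, abs_mul,
    NNReal.abs_eq]

theorem dist_le_foldDist_fold {ψ : ℂ → ℝ} (hψ : IsWeightLipschitz ψ)
    (hslits : ∀ z ∈ slits, ψ z = 0) (p q : ℂ) :
    dist (ψ p) (ψ q) ≤ foldDist (fold p) (fold q) := by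
  have hfactor : ψ.FactorsThrough fold := by
    intro p q h
    by_cases hp : p ∈ slits
    · by_cases hq : q ∈ slits
      · rw [hslits p hp, hslits q hq]
      · rw [eq_of_fold_eq hq h.symm]
    · rw [eq_of_fold_eq hp h]
  have hext := hfactor.extend_comp (0 : ℂ → ℝ)
  have hle := dist_le_foldDist (hext.symm ▸ hψ) (fold p) (fold q)
  rwa [hfactor.extend_apply, hfactor.extend_apply] at hle

theorem exists_mul_dist_le_foldDist_fold {p : ℂ} (hp : p ∉ slits) {m : ℝ≥0}
    (hm : m < weight p.im) :
    ∃ ε > 0, ∀ x ∈ ball p ε, ∀ y ∈ ball p ε, m * dist x y ≤ foldDist (fold x) (fold y) := by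
  have hnear : ∀ᶠ z in 𝓝 p, z ∉ slits ∧ m < weight z.im :=
    (isClosed_slits.isOpen_compl.eventually_mem hp).and
      ((continuous_weight.comp Complex.continuous_im).continuousAt.eventually_const_lt hm)
  obtain ⟨r, hr, hball⟩ := Metric.eventually_nhds_iff_ball.1 hnear
  refine ⟨r / 4, by positivity, fun x hx y hy => ?_⟩
  have hsupp : ∀ z, cone (r / 2) y z ≠ 0 → z ∈ ball p r := by
    intro z hz
    have hzy : dist z y < r / 2 := not_le.1 fun h => hz (cone_of_le h)
    have hzp := dist_triangle z y p
    rw [mem_ball] at hy ⊢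
    linarith
  have hlip : LipschitzWith m fun z => (m : ℝ) * cone (r / 2) y z := by
    refine LipschitzWith.of_dist_le_mul fun u v => ?_
    rw [Real.dist_eq, ← mul_sub, abs_mul, NNReal.abs_eq, ← Real.dist_eq]
    exact mul_le_mul_of_nonneg_left
      (by simpa using (lipschitzWith_cone (r / 2) y).dist_le_mul u v) m.2
  have hle := dist_le_foldDist_fold
    (isWeightLipschitz_of_lipschitzWith hlip fun z hz =>
      (hball z (hsupp z (right_ne_zero_of_mul hz))).2.le)
    (fun z hz => by_contra fun h => (hball z (hsupp z (right_ne_zero_of_mul h))).1 hz) x y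
  have hxy : dist x y ≤ r / 2 := by
    have htri := dist_triangle_right x y p
    rw [mem_ball] at hx hy
    linarith
  rwa [Real.dist_eq, ← mul_sub, abs_mul, NNReal.abs_eq, ← Real.dist_eq,
    dist_cone_cone_self (by positivity), min_eq_right hxy] at hle

/-- The surface of the theorem: the plane, obtained from a copy of `ℂ` with the conformal length
element `weight y * √(dx ^ 2 + dy ^ 2)` by collapsing each slit to a point by `fold`. -/
def FoldedPlane : Type := ℂ

noncomputable instance : MetricSpace FoldedPlane where
  dist a b := foldDist a b
  dist_self a := by simp only [foldDist, dist_self, ciSup_const]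
  dist_comm a b := by simp only [foldDist, dist_comm]
  dist_triangle a b c := ciSup_le fun φ => (dist_triangle (φ.1 a) (φ.1 b) (φ.1 c)).trans
    (add_le_add (dist_le_foldDist φ.2 a b) (dist_le_foldDist φ.2 b c))
  eq_of_dist_eq_zero {a b} h := by
    change foldDist a b = 0 at h
    obtain ⟨c, hc, hle⟩ := exists_mul_min_le_foldDist b
    have hmin : min 1 (dist (α := ℂ) a b) ≤ 0 :=
      nonpos_of_mul_nonpos_right ((hle a).trans_eq h) hc
    exact dist_le_zero (γ := ℂ).1 ((min_le_iff.1 hmin).resolve_left (by norm_num))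

noncomputable instance : MeasurableSpace FoldedPlane := borel FoldedPlane

instance : BorelSpace FoldedPlane := ⟨rfl⟩

/-- The map `fold`, regarded as a map onto the surface. -/
noncomputable def toFoldedPlane (z : ℂ) : FoldedPlane := fold z

theorem dist_toFoldedPlane_le {p q : ℂ} {L : ℝ} (hL : ∀ y ∈ uIcc p.im q.im, weight y ≤ L) :
    dist (toFoldedPlane p) (toFoldedPlane q) ≤ L * dist p q := foldDist_fold_le hL

theorem lipschitzWith_toFoldedPlane : LipschitzWith 1 toFoldedPlane :=
  LipschitzWith.of_dist_le_mul fun _ _ => dist_toFoldedPlane_le fun y _ => weight_le_one y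

theorem surjective_toFoldedPlane : Function.Surjective toFoldedPlane := surjective_fold

theorem injOn_toFoldedPlane : InjOn toFoldedPlane slitsᶜ := fun _ hp _ _ h => eq_of_fold_eq hp h

/-- The identification of the surface with the plane carries its metric topology to the
Euclidean one. -/
def FoldedPlane.homeomorph : FoldedPlane ≃ₜ ℂ where
  toFun z := z
  invFun z := z
  left_inv _ := rfl
  right_inv _ := rfl
  continuous_toFun := by
    refine Metric.continuous_iff.2 fun a ε hε => ?_
    obtain ⟨c, hc, hle⟩ := exists_mul_min_le_foldDist a
    refine ⟨c * min 1 ε, by positivity, fun b hba => ?_⟩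
    have hmin := lt_of_mul_lt_mul_left ((hle b).trans_lt hba) hc.le
    exact (min_lt_iff.1 hmin).elim
      (fun h => absurd (h.trans_le (min_le_left _ _)) (lt_irrefl _))
      fun h => h.trans_le (min_le_right _ _)
  continuous_invFun := isQuotientMap_fold.continuous_iff.2 lipschitzWith_toFoldedPlane.continuous

theorem isAddHaarMeasure_hausdorffMeasure_two : (μH[2] : Measure ℂ).IsAddHaarMeasure := by
  simpa [Complex.finrank_real_complex] using isAddHaarMeasure_hausdorffMeasure (E := ℂ)

theorem isLocallyFiniteMeasure_foldedPlane :
    IsLocallyFiniteMeasure (hausdorff2 FoldedPlane) := by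
  refine ⟨fun a => ?_⟩
  have hhaar := isAddHaarMeasure_hausdorffMeasure_two
  set K : Set ℂ := closedBall (FoldedPlane.homeomorph a) 1
  have himage : FoldedPlane.homeomorph ⁻¹' K = toFoldedPlane '' (fold ⁻¹' K) :=
    (image_preimage_eq _ surjective_fold).symm
  have hfinite : μH[2] (fold ⁻¹' K) < ⊤ :=
    (isProperMap_fold.isCompact_preimage (isCompact_closedBall _ _)).measure_lt_top
  have hle := lipschitzWith_toFoldedPlane.hausdorffMeasure_image_le zero_le_two (fold ⁻¹' K)
  refine ⟨FoldedPlane.homeomorph ⁻¹' K,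
    FoldedPlane.homeomorph.continuous.continuousAt (closedBall_mem_nhds _ one_pos), ?_⟩
  rw [himage, hausdorff2, Measure.smul_apply, smul_eq_mul]
  exact ENNReal.mul_lt_top ENNReal.ofReal_lt_top (hle.trans_lt (by simpa using hfinite))

section InnerDistance

variable {X : Type*} [MetricSpace X]

theorem Curve.exists_concat (γ δ : Curve X) (h : γ.toFun γ.b = δ.toFun δ.a) :
    ∃ η : Curve X, η.toFun η.a = γ.toFun γ.a ∧ η.toFun η.b = δ.toFun δ.b ∧
      η.length = γ.length + δ.length := by
  set shift : ℝ → ℝ := fun t => t + (δ.a - γ.b)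
  set c : ℝ := γ.b + (δ.b - δ.a)
  have hbc : γ.b ≤ c := le_add_of_nonneg_right (sub_nonneg.2 δ.hab)
  have hshift_b : shift γ.b = δ.a := add_sub_cancel _ _
  have hshift_c : shift c = δ.b := by
    simp only [shift, c]
    ring
  have himage : shift '' Icc γ.b c = Icc δ.a δ.b := by
    rw [← hshift_b, ← hshift_c]
    exact image_add_const_Icc _ _ _
  set f : ℝ → X := fun t => if t ≤ γ.b then γ.toFun t else δ.toFun (shift t)
  have hleft : EqOn f γ.toFun (Icc γ.a γ.b) := fun t ht => if_pos ht.2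
  have hright : EqOn f (δ.toFun ∘ shift) (Icc γ.b c) := by
    intro t ht
    rcases ht.1.eq_or_lt with rfl | hlt
    · exact (hleft (right_mem_Icc.2 γ.hab)).trans (h.trans (congrArg δ.toFun hshift_b.symm))
    · exact if_neg hlt.not_ge
  have hcont : ContinuousOn f (Icc γ.a c) := by
    rw [← Icc_union_Icc_eq_Icc γ.hab hbc]
    refine (γ.cont.congr hleft).union_of_isClosed ?_ isClosed_Icc isClosed_Icc
    exact (δ.cont.comp (by fun_prop) (mapsTo_iff_image_subset.2 himage.subset)).congr hright
  refine ⟨⟨γ.a, c, γ.hab.trans hbc, f, hcont⟩, hleft (left_mem_Icc.2 γ.hab),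
    (hright (right_mem_Icc.2 hbc)).trans (congrArg δ.toFun hshift_c), ?_⟩
  have hadd := eVariationOn.Icc_add_Icc f (s := univ) γ.hab hbc (mem_univ _)
  simp only [univ_inter] at hadd
  rw [length, ← hadd, eVariationOn.congr hleft, eVariationOn.congr hright,
    eVariationOn.comp_eq_of_monotoneOn _ _ fun s _ t _ hst => add_le_add_left hst _, himage]
  rfl

/-- The infimum of the lengths of the curves from `x` to `y`. -/
noncomputable def innerEDist (x y : X) : ℝ≥0∞ :=
  ⨅ γ : {γ : Curve X // γ.toFun γ.a = x ∧ γ.toFun γ.b = y}, γ.1.length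

theorem innerEDist_le_length (γ : Curve X) :
    innerEDist (γ.toFun γ.a) (γ.toFun γ.b) ≤ γ.length :=
  iInf_le_of_le ⟨γ, rfl, rfl⟩ le_rfl

theorem innerEDist_self (x : X) : innerEDist x x = 0 := by
  have hle := innerEDist_le_length ⟨0, 0, le_rfl, fun _ => x, continuousOn_const⟩
  simpa [Curve.length] using hle

theorem edist_le_innerEDist (x y : X) : edist x y ≤ innerEDist x y := by
  refine le_iInf ?_
  rintro ⟨γ, rfl, rfl⟩
  exact eVariationOn.edist_le _ (left_mem_Icc.2 γ.hab) (right_mem_Icc.2 γ.hab)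

theorem innerEDist_triangle (x y z : X) : innerEDist x z ≤ innerEDist x y + innerEDist y z := by
  refine ENNReal.le_iInf_add_iInf ?_
  rintro ⟨γ, rfl, rfl⟩ ⟨δ, hδ, rfl⟩
  obtain ⟨η, hηa, hηb, hlen⟩ := γ.exists_concat δ hδ.symm
  rw [← hlen, ← hηa, ← hηb]
  exact innerEDist_le_length η

end InnerDistance

theorem innerEDist_toFoldedPlane_le {p q : ℂ} {L : ℝ} (hL : ∀ y ∈ uIcc p.im q.im, weight y ≤ L) :
    innerEDist (toFoldedPlane p) (toFoldedPlane q) ≤ ENNReal.ofReal (L * dist p q) := by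
  set σ : ℝ →ᵃ[ℝ] ℂ := AffineMap.lineMap p q
  have hL0 : 0 ≤ L := (weight_pos _).le.trans (hL _ left_mem_uIcc)
  have hconvex : Convex ℝ (Complex.im ⁻¹' uIcc p.im q.im) :=
    (convex_uIcc p.im q.im).linear_preimage Complex.imLm
  have him : ∀ t ∈ Icc (0 : ℝ) 1, (σ t).im ∈ uIcc p.im q.im := fun t ht =>
    hconvex.lineMap_mem (x := p) (y := q) left_mem_uIcc right_mem_uIcc ht
  have hlip : LipschitzOnWith (L * dist p q).toNNReal (toFoldedPlane ∘ σ) (Icc 0 1) := by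
    refine LipschitzOnWith.of_dist_le_mul fun s hs t ht => ?_
    rw [Real.coe_toNNReal _ (by positivity), mul_assoc, mul_comm (dist p q),
      ← dist_lineMap_lineMap]
    exact dist_toFoldedPlane_le fun y hy => hL y (uIcc_subset_uIcc (him s hs) (him t ht) hy)
  have hid : eVariationOn id (Icc (0 : ℝ) 1) = 1 := by simp
  have hlen : innerEDist (toFoldedPlane (σ 0)) (toFoldedPlane (σ 1)) ≤
      eVariationOn (toFoldedPlane ∘ σ) (Icc 0 1) :=
    innerEDist_le_length ⟨0, 1, zero_le_one, toFoldedPlane ∘ σ, hlip.continuousOn⟩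
  have hvar := hlip.comp_eVariationOn_le (g := id) (mapsTo_id _)
  rw [hid, mul_one] at hvar
  rw [AffineMap.lineMap_apply_zero, AffineMap.lineMap_apply_one] at hlen
  exact hlen.trans hvar

theorem innerEDist_ne_top (x y : FoldedPlane) : innerEDist x y ≠ ⊤ := by
  obtain ⟨p, rfl⟩ := surjective_toFoldedPlane x
  obtain ⟨q, rfl⟩ := surjective_toFoldedPlane y
  exact ne_top_of_le_ne_top ENNReal.ofReal_ne_top
    (innerEDist_toFoldedPlane_le fun y _ => weight_le_one y)

theorem isWeightLipschitz_innerEDist (x : FoldedPlane) :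
    IsWeightLipschitz fun z => (innerEDist x (toFoldedPlane z)).toReal := by
  have hle : ∀ p q : ℂ, ∀ L : ℝ, (∀ y ∈ uIcc p.im q.im, weight y ≤ L) →
      (innerEDist x (toFoldedPlane q)).toReal ≤
        (innerEDist x (toFoldedPlane p)).toReal + L * dist p q := by
    intro p q L hL
    have hL0 : 0 ≤ L := (weight_pos _).le.trans (hL _ left_mem_uIcc)
    have hstep : innerEDist x (toFoldedPlane q) ≤
        innerEDist x (toFoldedPlane p) + ENNReal.ofReal (L * dist p q) :=
      (innerEDist_triangle _ _ _).trans (add_le_add le_rfl (innerEDist_toFoldedPlane_le hL))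
    have hreal := ENNReal.toReal_mono
      (ENNReal.add_ne_top.2 ⟨innerEDist_ne_top _ _, ENNReal.ofReal_ne_top⟩) hstep
    rwa [ENNReal.toReal_add (innerEDist_ne_top _ _) ENNReal.ofReal_ne_top,
      ENNReal.toReal_ofReal (by positivity)] at hreal
  intro p q L hL
  have hpq := hle p q L hL
  have hqp := hle q p L (by rwa [uIcc_comm])
  rw [dist_comm q p] at hqp
  rw [Real.dist_eq, abs_le]
  constructor <;> linarith

/-- The distance to `x` along curves is itself an admissible test function in `foldDist`. -/
theorem isLengthSpace_foldedPlane : IsLengthSpace FoldedPlane := by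
  intro x y
  refine (edist_le_innerEDist x y).antisymm ?_
  have hle := dist_le_foldDist (φ := fun b : ℂ => (innerEDist (X := FoldedPlane) x b).toReal)
    (isWeightLipschitz_innerEDist x) y x
  rw [innerEDist_self, ENNReal.toReal_zero, dist_zero_right, Real.norm_of_nonneg
    ENNReal.toReal_nonneg] at hle
  rw [edist_comm, edist_dist]
  exact (ENNReal.le_ofReal_iff_toReal_le (innerEDist_ne_top x y) dist_nonneg).2 hle

/-! ### The parametrization by the plane -/

theorem hausdorffMeasure_two_image_eq_zero {E : Type*} [MetricSpace E] [MeasurableSpace E]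
    [BorelSpace E] {f : ℝ → E} {K : ℝ≥0} {s : Set ℝ} (hf : LipschitzOnWith K f s) :
    μH[2] (f '' s) = 0 := by
  have hdim : dimH s < (2 : ℝ≥0) :=
    (dimH_mono (subset_univ s)).trans_lt (by rw [Real.dimH_univ]; norm_num)
  have hzero : (μH[2] : Measure ℝ) s = 0 := by simpa using hausdorffMeasure_of_dimH_lt hdim
  have hle := hf.hausdorffMeasure_image_le zero_le_two
  rwa [hzero, mul_zero, nonpos_iff_eq_zero] at hle

theorem isometry_verticalLine (x : ℝ) : Isometry fun y : ℝ => (⟨x, y⟩ : ℂ) :=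
  Isometry.of_dist_eq fun y y' => by
    rw [Complex.dist_eq_re_im, Real.dist_eq]
    simp [Real.sqrt_sq_eq_abs]

theorem exists_eq_add_half_of_distInt_eq_half {x : ℝ} (hx : distInt x = 1 / 2) :
    ∃ k : ℤ, x = k + 1 / 2 := by
  rcases abs_cases (x - round x) with ⟨habs, -⟩ | ⟨habs, -⟩
  · exact ⟨round x, by rw [distInt, habs] at hx; linarith⟩
  · exact ⟨round x - 1, by rw [distInt, habs] at hx; push_cast; linarith⟩

theorem hausdorffMeasure_two_slits : μH[2] slits = 0 := by
  refine measure_mono_null (t := ⋃ (j : ℕ) (k : ℤ),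
    range fun y : ℝ => (⟨(k + 1 / 2) / 2 ^ j, y⟩ : ℂ)) ?_
    (measure_iUnion_null fun j => measure_iUnion_null fun k => ?_)
  · rintro z ⟨j, hj, -⟩
    obtain ⟨k, hk⟩ := exists_eq_add_half_of_distInt_eq_half (sub_eq_zero.1 hj).symm
    refine mem_iUnion₂.2 ⟨j, k, z.im, Complex.ext ?_ rfl⟩
    change (k + 1 / 2) / 2 ^ j = z.re
    rw [← hk, mul_div_cancel_left₀ _ (by positivity)]
  · rw [← image_univ]
    exact hausdorffMeasure_two_image_eq_zero (isometry_verticalLine _).lipschitz.lipschitzOnWith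

theorem isPreconnected_preimage_fold (c : ℂ) : IsPreconnected (fold ⁻¹' {c}) := by
  have hfiber : fold ⁻¹' {c} =
      (fun y : ℝ => (⟨c.re, y⟩ : ℂ)) '' (height c.re ⁻¹' {c.im}) := by
    refine Subset.antisymm (fun z hz => ?_) ?_
    · have hzc : fold z = c := hz
      exact ⟨z.im, by rw [← hzc]; rfl, by rw [← hzc]; rfl⟩
    · rintro _ ⟨y, hy, rfl⟩
      exact Complex.ext rfl hy
  rw [hfiber]
  exact (ordConnected_singleton.preimage_mono (monotone_height c.re)).isPreconnected.image _
    (isometry_verticalLine _).continuous.continuousOn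

theorem isPreconnected_preimage_toFoldedPlane (b : FoldedPlane) :
    IsPreconnected (toFoldedPlane ⁻¹' {b}) :=
  isPreconnected_preimage_fold b

theorem localLipschitzBound_toFoldedPlane :
    LocalLipschitzBound toFoldedPlane fun z => NNReal.mk (2 * weight z.im)
      (mul_nonneg zero_le_two (weight_pos _).le) := by
  intro a
  obtain ⟨ε, hε, hball⟩ := exists_forall_ball_weight_mem a.im
  refine ⟨Complex.im ⁻¹' ball a.im ε, Complex.continuous_im.continuousAt (ball_mem_nhds _ hε),
    LipschitzOnWith.of_dist_le_mul fun p hp q hq => dist_toFoldedPlane_le fun y hy =>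
      (hball y ?_).2⟩
  exact (convex_ball a.im ε).segment_subset hp hq (segment_eq_uIcc (𝕜 := ℝ) .. ▸ hy)

theorem locallyExpandsOn_toFoldedPlane :
    LocallyExpandsOn toFoldedPlane (fun z => NNReal.mk (2 * weight z.im)
      (mul_nonneg zero_le_two (weight_pos _).le)) 8 slitsᶜ := by
  intro a ha
  have hweight := weight_pos a.im
  obtain ⟨ε, hε, hball⟩ := exists_forall_ball_weight_mem a.im
  obtain ⟨r, hr, hexp⟩ := exists_mul_dist_le_foldDist_fold ha
    (m := NNReal.mk (weight a.im / 2) (by positivity))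
    (by rw [NNReal.coe_mk]; linarith)
  refine ⟨Complex.im ⁻¹' ball a.im ε ∩ ball a r,
    inter_mem (Complex.continuous_im.continuousAt (ball_mem_nhds _ hε)) (ball_mem_nhds _ hr),
    NNReal.mk (4 * weight a.im) (by positivity), fun x hx => ?_, fun x hx y hy => ?_⟩
  · have hle := (hball x.im hx.1.1).2
    exact NNReal.coe_le_coe.1 (by rw [NNReal.coe_mk, NNReal.coe_mk]; linarith)
  · have hle := hexp x hx.1.2 y hy.1.2
    change _ ≤ dist (toFoldedPlane x) (toFoldedPlane y) at hle
    rw [NNReal.coe_mk] at hle ⊢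
    rw [NNReal.coe_ofNat]
    linarith

theorem weaklyQC_toFoldedPlane : WeaklyQC (((8 : ℝ≥0) : ℝ) ^ 2) toFoldedPlane := by
  refine weaklyQC_of_locallyExpandsOn localLipschitzBound_toFoldedPlane ?_
    isClosed_slits.measurableSet.compl (by norm_num) locallyExpandsOn_toFoldedPlane ?_
    injOn_toFoldedPlane surjective_toFoldedPlane isPreconnected_preimage_toFoldedPlane
  · exact ((continuous_weight.comp Complex.continuous_im).const_mul 2).measurable.subtype_mk
  · filter_upwards [measure_eq_zero_iff_ae_notMem.1 hausdorffMeasure_two_slits] with z hz hmem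
    exact absurd hz hmem

/-! ### Collapsing horizontal segments -/

/-- The truncation of a real number to `[-1/2, 1/2]`. -/
noncomputable def halfClamp (s : ℝ) : ℝ := max (-1 / 2) (min (1 / 2) s)

theorem halfClamp_le_half (s : ℝ) : halfClamp s ≤ 1 / 2 := max_le (by norm_num) (min_le_left _ _)

theorem neg_half_le_halfClamp (s : ℝ) : -1 / 2 ≤ halfClamp s := le_max_left _ _

theorem monotone_halfClamp : Monotone halfClamp :=
  fun _ _ h => max_le_max le_rfl (min_le_min le_rfl h)

theorem lipschitzWith_halfClamp : LipschitzWith 1 halfClamp :=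
  (LipschitzWith.id.const_min _).const_max _

theorem halfClamp_of_mem {s : ℝ} (hs : s ∈ Icc (-1 / 2 : ℝ) (1 / 2)) : halfClamp s = s := by
  rw [halfClamp, min_eq_right hs.2, max_eq_right hs.1]

theorem halfClamp_of_half_le {s : ℝ} (hs : 1 / 2 ≤ s) : halfClamp s = 1 / 2 := by
  rw [halfClamp, min_eq_left hs, max_eq_right (by norm_num)]

theorem halfClamp_of_nonneg {s : ℝ} (hs : 0 ≤ s) : halfClamp s = min (1 / 2) s :=
  max_eq_right (le_min (by norm_num) (by linarith))

theorem halfClamp_neg (s : ℝ) : halfClamp (-s) = -halfClamp s := by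
  rcases le_total s (1 / 2) with hs | hs
  · rcases le_total (-1 / 2) s with hs' | hs'
    · rw [halfClamp_of_mem ⟨hs', hs⟩, halfClamp_of_mem ⟨by linarith, by linarith⟩]
    · rw [halfClamp_of_half_le (by linarith), halfClamp, min_eq_right hs, max_eq_left hs']
      norm_num
  · rw [halfClamp_of_half_le hs, halfClamp, min_eq_right (by linarith), max_eq_left (by linarith),
      neg_div]

theorem half_sub_halfClamp_div_le {w s : ℝ} (hw : 0 < w) (hw1 : w ≤ 1) (hs : s ≤ 1 / 2) :
    1 / 2 - halfClamp (s / w) ≤ (1 / 2 - s) / w := by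
  have hle : min (1 / 2) (s / w) ≤ halfClamp (s / w) := le_max_right _ _
  rcases min_choice (1 / 2) (s / w) with hmin | hmin
  · have := div_nonneg (sub_nonneg.2 hs) hw.le
    linarith
  · have := le_div_self (a := (1 / 2 : ℝ)) (by norm_num) hw hw1
    rw [sub_div]
    linarith

theorem abs_halfClamp_sub_halfClamp_mul_le {c : ℝ} (hc : 0 ≤ c) (hc1 : c ≤ 1) (s : ℝ) :
    |halfClamp s - halfClamp (c * s)| ≤ (1 - c) / 2 := by
  wlog hs : 0 ≤ s generalizing s
  · have h := this (-s) (by linarith)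
    rwa [mul_neg, halfClamp_neg, halfClamp_neg, neg_sub_neg, abs_sub_comm] at h
  have hle := monotone_halfClamp (mul_le_of_le_one_left hs hc1)
  have hscale : c * halfClamp s ≤ halfClamp (c * s) := by
    rw [halfClamp_of_nonneg hs, halfClamp_of_nonneg (mul_nonneg hc hs), mul_min_of_nonneg _ _ hc]
    exact min_le_min_right _ (by linarith)
  rw [abs_of_nonneg (sub_nonneg.2 hle)]
  nlinarith [halfClamp_le_half s]

theorem round_eq_of_abs_sub_lt {x : ℝ} {k : ℤ} (h : |x - k| < 1 / 2) : round x = k := by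
  rw [abs_lt] at h
  exact round_eq_iff.2 ⟨by linarith, by linarith⟩

/-- The monotone map that stretches the interval of length `w` around each integer to length `1`,
and collapses the complementary intervals to the half-integers. -/
noncomputable def collapse (w a : ℝ) : ℝ := round a + halfClamp ((a - round a) / w)

section Collapse

variable {w a b : ℝ} {k : ℤ}

theorem collapse_eq_add_halfClamp (hw : 0 < w) (hw1 : w ≤ 1) (h : |a - k| ≤ 1 / 2) :
    collapse w a = k + halfClamp ((a - k) / w) := by
  rcases h.lt_or_eq with hlt | heq
  · rw [collapse, round_eq_of_abs_sub_lt hlt]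
  have hhalf : halfClamp (1 / 2 / w) = 1 / 2 :=
    halfClamp_of_half_le (le_div_self (by norm_num) hw hw1)
  rcases eq_or_eq_neg_of_abs_eq heq with h' | h'
  · have hround : round a = k + 1 := round_eq_iff.2 (by push_cast; constructor <;> linarith)
    have hsub : a - ((k + 1 : ℤ) : ℝ) = -(1 / 2) := by push_cast; linarith
    rw [collapse, hround, hsub, h', neg_div, halfClamp_neg, hhalf]
    push_cast
    ring
  · have hround : round a = k := round_eq_iff.2 ⟨by linarith, by linarith⟩
    rw [collapse, hround]

theorem collapse_eq_add_div (hw : 0 < w) (hw1 : w ≤ 1) (h : |a - k| ≤ w / 2) :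
    collapse w a = k + (a - k) / w := by
  rw [collapse_eq_add_halfClamp (k := k) hw hw1 (by linarith), halfClamp_of_mem]
  rw [abs_le] at h
  exact ⟨by rw [le_div_iff₀ hw]; linarith, by rw [div_le_iff₀ hw]; linarith⟩

theorem collapse_eq_add_half (hw : 0 < w) (hw1 : w ≤ 1) (h : |a - (k + 1 / 2)| ≤ (1 - w) / 2) :
    collapse w a = k + 1 / 2 := by
  rw [abs_le] at h
  rcases le_total a (k + 1 / 2) with hle | hle
  · rw [collapse_eq_add_halfClamp (k := k) hw hw1 (abs_le.2 ⟨by linarith, by linarith⟩),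
      halfClamp_of_half_le]
    rw [le_div_iff₀ hw]
    linarith
  · have hhalf : halfClamp ((k + 1 - a) / w) = 1 / 2 :=
      halfClamp_of_half_le (by rw [le_div_iff₀ hw]; linarith)
    rw [collapse_eq_add_halfClamp (k := k + 1) hw hw1
        (abs_le.2 (by push_cast; constructor <;> linarith)),
      Int.cast_add, Int.cast_one, ← neg_sub, neg_div, halfClamp_neg, hhalf]
    ring

theorem collapse_one : collapse 1 = id := by
  ext a
  rw [collapse_eq_add_div (k := round a) one_pos le_rfl (abs_sub_round a), div_one, id,
    add_sub_cancel]

theorem collapse_sub_mem_Icc (hw : 0 < w) (hw1 : w ≤ 1) (hab : a ≤ b) :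
    collapse w b - collapse w a ∈ Icc 0 ((b - a) / w) := by
  have hround : round a ≤ round b := by
    rw [round_eq, round_eq]
    exact Int.floor_mono (by linarith)
  rcases hround.eq_or_lt with heq | hlt
  · have hle : (a - round b) / w ≤ (b - round b) / w := by gcongr
    have hmono := monotone_halfClamp hle
    have hlip := lipschitzWith_halfClamp.dist_le_mul ((b - round b) / w) ((a - round b) / w)
    rw [Real.dist_eq, Real.dist_eq, abs_of_nonneg (sub_nonneg.2 hmono), NNReal.coe_one, one_mul,
      abs_of_nonneg (sub_nonneg.2 hle), ← sub_div, sub_sub_sub_cancel_right] at hlip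
    rw [collapse, collapse, heq, add_sub_add_left_eq_sub]
    exact ⟨sub_nonneg.2 hmono, hlip⟩
  · have hcast : (round a : ℝ) + 1 ≤ round b := by exact_mod_cast hlt
    have ha := abs_le.1 (abs_sub_round a)
    have hb := abs_le.1 (abs_sub_round b)
    have hleft := half_sub_halfClamp_div_le hw hw1 ha.2
    have hright := half_sub_halfClamp_div_le (s := -(b - round b)) hw hw1 (by linarith)
    rw [neg_div, halfClamp_neg] at hright
    have hmid := le_div_self (sub_nonneg.2 hcast) hw hw1
    have hsum : (b - a) / w = (1 / 2 - (a - round a)) / w + (1 / 2 - -(b - round b)) / w +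
      (round b - (round a + 1)) / w := by ring
    rw [collapse, collapse]
    constructor
    · linarith [halfClamp_le_half ((a - round a) / w), neg_half_le_halfClamp ((b - round b) / w)]
    · linarith

theorem abs_collapse_exp_sub_le (a d e : ℝ) :
    |collapse (Real.exp (-d)) a - collapse (Real.exp (-e)) a| ≤ |d - e| := by
  wlog hde : d ≤ e generalizing d e
  · rw [abs_sub_comm, abs_sub_comm d]
    exact this e d (le_of_not_ge hde)
  have hscale : (a - round a) / Real.exp (-d) =
      Real.exp (d - e) * ((a - round a) / Real.exp (-e)) := by
    rw [Real.exp_sub, Real.exp_neg, Real.exp_neg]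
    field_simp
  have hc := abs_halfClamp_sub_halfClamp_mul_le (Real.exp_pos (d - e)).le
    (Real.exp_le_one_iff.2 (sub_nonpos.2 hde)) ((a - round a) / Real.exp (-e))
  rw [collapse, collapse, add_sub_add_left_eq_sub, abs_sub_comm, hscale, abs_sub_comm d,
    abs_of_nonneg (sub_nonneg.2 hde)]
  linarith [Real.add_one_le_exp (d - e)]

end Collapse

/-- The right inverse of `collapse w` that avoids the interiors of the collapsed intervals. -/
noncomputable def expand (w x : ℝ) : ℝ := round x + (x - round x) * w

theorem expand_one : expand 1 = id := by
  ext x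
  rw [expand, mul_one, id, add_sub_cancel]

theorem collapse_expand {w : ℝ} (hw : 0 < w) (hw1 : w ≤ 1) (x : ℝ) :
    collapse w (expand w x) = x := by
  rw [collapse_eq_add_div (k := round x) hw hw1, expand, add_sub_cancel_left,
    mul_div_cancel_right₀ _ hw.ne', add_sub_cancel]
  rw [expand, add_sub_cancel_left, abs_mul, abs_of_pos hw]
  linarith [mul_le_mul_of_nonneg_right (abs_sub_round x) hw.le]

theorem abs_exp_sub_exp_le {a b W : ℝ} (ha : Real.exp a ≤ W) (hb : Real.exp b ≤ W) :
    |Real.exp a - Real.exp b| ≤ W * |a - b| := by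
  wlog hba : b ≤ a generalizing a b
  · rw [abs_sub_comm, abs_sub_comm a]
    exact this hb ha (le_of_not_ge hba)
  rw [abs_of_nonneg (sub_nonneg.2 (Real.exp_le_exp.2 hba)), abs_of_nonneg (sub_nonneg.2 hba)]
  have hb_eq : Real.exp b = Real.exp a * Real.exp (b - a) := by rw [← Real.exp_add, add_sub_cancel]
  have htangent : Real.exp a * (b - a + 1) ≤ Real.exp a * Real.exp (b - a) := by
    gcongr
    exact Real.add_one_le_exp (b - a)
  linarith [mul_le_mul_of_nonneg_right ha (sub_nonneg.2 hba)]

theorem abs_expand_exp_sub_le (x : ℝ) {d e : ℝ} (hd : 0 ≤ d) (he : 0 ≤ e) :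
    |expand (Real.exp (-d)) x - expand (Real.exp (-e)) x| ≤ |d - e| := by
  rw [expand, expand, add_sub_add_left_eq_sub, ← mul_sub, abs_mul]
  have hexp := abs_exp_sub_exp_le (Real.exp_le_one_iff.2 (neg_nonpos.2 hd))
    (Real.exp_le_one_iff.2 (neg_nonpos.2 he))
  rw [neg_sub_neg, abs_sub_comm e, one_mul] at hexp
  calc _ ≤ 1 / 2 * |d - e| := mul_le_mul (abs_sub_round x) hexp (abs_nonneg _) (by norm_num)
    _ ≤ |d - e| := by linarith [abs_nonneg (d - e)]

/-- The map `φ w`, with `w` the weight at height `t`, conjugated by the scaling `2 ^ n` that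
turns the slits at height `t ∈ [n, n + 1)` into the half-integers. -/
noncomputable def dyadicRescale (φ : ℝ → ℝ → ℝ) (x t : ℝ) : ℝ :=
  φ (weight t) (2 ^ ⌊t⌋₊ * x) / 2 ^ ⌊t⌋₊

section DyadicRescale

variable {φ : ℝ → ℝ → ℝ}

theorem dyadicRescale_of_weight_eq_one (hφ : φ 1 = id) (x : ℝ) {t : ℝ} (ht : weight t = 1) :
    dyadicRescale φ x t = x := by
  rw [dyadicRescale, ht, hφ, id, mul_div_cancel_left₀ _ (by positivity)]

theorem dyadicRescale_eq (hφ : φ 1 = id) (x : ℝ) {n : ℕ} {t : ℝ} (ht : t ∈ Icc (n : ℝ) (n + 1)) :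
    dyadicRescale φ x t = φ (weight t) (2 ^ n * x) / 2 ^ n := by
  rcases ht.2.lt_or_eq with hlt | rfl
  · rw [dyadicRescale, (Nat.floor_eq_iff (n.cast_nonneg.trans ht.1)).2 ⟨ht.1, hlt⟩]
  · have hweight : weight (n + 1) = 1 := by exact_mod_cast weight_natCast (n + 1)
    rw [dyadicRescale_of_weight_eq_one hφ x hweight, hweight, hφ, id,
      mul_div_cancel_left₀ _ (by positivity)]

theorem lipschitzWith_dyadicRescale (hφ : φ 1 = id) (hlip : ∀ a d e, 0 ≤ d → 0 ≤ e →
    |φ (Real.exp (-d)) a - φ (Real.exp (-e)) a| ≤ |d - e|) (x : ℝ) :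
    LipschitzWith 1 (dyadicRescale φ x) := by
  refine lipschitzWith_of_Icc_natCast (LipschitzOnWith.of_dist_le_mul fun s hs t ht => ?_)
    fun n => LipschitzOnWith.of_dist_le_mul fun s hs t ht => ?_
  · rw [dyadicRescale_of_weight_eq_one hφ x (weight_of_nonpos hs),
      dyadicRescale_of_weight_eq_one hφ x (weight_of_nonpos ht), dist_self]
    positivity
  · have hexponent := (lipschitzOnWith_weightExponent n).dist_le_mul s hs t ht
    have hφ' := hlip (2 ^ n * x) _ _ (weightExponent_nonneg s) (weightExponent_nonneg t)
    rw [NNReal.coe_pow, NNReal.coe_ofNat, Real.dist_eq] at hexponent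
    rw [dyadicRescale_eq hφ x hs, dyadicRescale_eq hφ x ht, Real.dist_eq, ← sub_div, abs_div,
      abs_of_pos (by positivity : (0 : ℝ) < 2 ^ n), div_le_iff₀ (by positivity), NNReal.coe_one,
      one_mul, mul_comm (dist s t)]
    exact hφ'.trans hexponent

end DyadicRescale

/-- The primitive of the weight, used to straighten the vertical coordinate. -/
noncomputable def weightPrimitive (y : ℝ) : ℝ := ∫ s in (0 : ℝ)..y, weight s

theorem intervalIntegrable_weight (a b : ℝ) : IntervalIntegrable weight volume a b :=
  continuous_weight.intervalIntegrable a b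

theorem weightPrimitive_sub (a b : ℝ) :
    weightPrimitive b - weightPrimitive a = ∫ s in a..b, weight s :=
  intervalIntegral.integral_interval_sub_left (intervalIntegrable_weight _ _)
    (intervalIntegrable_weight _ _)

theorem dist_weightPrimitive_le {a b M : ℝ} (hM : ∀ s ∈ uIcc a b, weight s ≤ M) :
    dist (weightPrimitive a) (weightPrimitive b) ≤ M * dist a b := by
  rw [dist_comm, dist_comm a, Real.dist_eq, weightPrimitive_sub, Real.dist_eq]
  refine intervalIntegral.norm_integral_le_of_norm_le_const (f := weight) fun s hs => ?_
  rw [Real.norm_of_nonneg (weight_pos s).le]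
  exact hM s (uIoc_subset_uIcc hs)

theorem mul_dist_le_dist_weightPrimitive {a b m : ℝ} (hm : ∀ s ∈ uIcc a b, m ≤ weight s) :
    m * dist a b ≤ dist (weightPrimitive a) (weightPrimitive b) := by
  wlog hab : a ≤ b generalizing a b
  · rw [dist_comm a, dist_comm (weightPrimitive a)]
    exact this (uIcc_comm a b ▸ hm) (le_of_not_ge hab)
  rw [uIcc_of_le hab] at hm
  have hle := intervalIntegral.integral_mono_on hab (intervalIntegrable_const (c := m))
    (intervalIntegrable_weight a b) hm
  rw [intervalIntegral.integral_const, smul_eq_mul, ← weightPrimitive_sub] at hle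
  rw [dist_comm, dist_comm (weightPrimitive a), Real.dist_eq, Real.dist_eq,
    abs_of_nonneg (sub_nonneg.2 hab), mul_comm]
  exact hle.trans (le_abs_self _)

theorem lipschitzWith_weightPrimitive : LipschitzWith 1 weightPrimitive :=
  LipschitzWith.of_dist_le_mul fun _ _ => dist_weightPrimitive_le fun s _ => weight_le_one s

theorem strictMono_weightPrimitive : StrictMono weightPrimitive := fun a b hab => by
  have hpos := intervalIntegral.intervalIntegral_pos_of_pos (intervalIntegrable_weight a b)
    weight_pos hab
  rwa [← weightPrimitive_sub, sub_pos] at hpos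

theorem weightPrimitive_zero : weightPrimitive 0 = 0 := intervalIntegral.integral_same

theorem weightPrimitive_of_nonpos {y : ℝ} (hy : y ≤ 0) : weightPrimitive y = y := by
  have hone : EqOn weight (fun _ => 1) (uIcc 0 y) := fun s hs =>
    weight_of_nonpos (uIcc_of_ge hy ▸ hs).2
  rw [weightPrimitive, intervalIntegral.integral_congr hone, intervalIntegral.integral_const,
    smul_eq_mul, mul_one, sub_zero]

theorem integral_exp_neg_mul_le {c : ℝ} (hc : 0 < c) (L : ℝ) :
    ∫ s in (0 : ℝ)..L, Real.exp (-c * s) ≤ 1 / c := by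
  rw [intervalIntegral.integral_comp_mul_left _ (neg_ne_zero.2 hc.ne'), integral_exp, mul_zero,
    Real.exp_zero, smul_eq_mul, inv_neg, one_div, neg_mul, ← mul_neg, neg_sub]
  exact mul_le_of_le_one_right (inv_nonneg.2 hc.le) (by linarith [Real.exp_pos (-c * L)])

theorem weight_le_exp_add_exp {n : ℕ} {s : ℝ} (hs : s ∈ Icc (n : ℝ) (n + 1)) :
    weight s ≤ Real.exp (-2 ^ n * (s - n)) + Real.exp (-2 ^ n * (n + 1 - s)) := by
  have hpow : -(2 : ℝ) ^ n ≤ 0 := neg_nonpos.2 (by positivity)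
  have hleft := Real.exp_pos (-2 ^ n * (s - n))
  have hright := Real.exp_pos (-2 ^ n * (n + 1 - s))
  rw [weight, weightExponent_eq hs, ← neg_mul]
  rcases le_or_gt (round s) n with hround | hround
  · have hle : s - n ≤ distInt s := by
      have : (round s : ℝ) ≤ n := by exact_mod_cast hround
      exact (sub_le_sub_left this s).trans (le_abs_self _)
    have := Real.exp_le_exp.2 (mul_le_mul_of_nonpos_left hle hpow)
    linarith
  · have hle : n + 1 - s ≤ distInt s := by
      have : (n : ℝ) + 1 ≤ round s := by exact_mod_cast hround
      exact (sub_le_sub_right this s).trans ((le_abs_self _).trans_eq (abs_sub_comm _ _))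
    have := Real.exp_le_exp.2 (mul_le_mul_of_nonpos_left hle hpow)
    linarith

theorem weightPrimitive_add_one_sub_le (n : ℕ) :
    weightPrimitive (n + 1) - weightPrimitive n ≤ 2 / 2 ^ n := by
  have hc : (0 : ℝ) < 2 ^ n := by positivity
  have hint := intervalIntegral.integral_mono_on (a := (n : ℝ)) (b := n + 1) (by linarith)
    (intervalIntegrable_weight _ _) (Continuous.intervalIntegrable (by fun_prop) _ _)
    fun s hs => weight_le_exp_add_exp hs
  rw [intervalIntegral.integral_add (Continuous.intervalIntegrable (by fun_prop) _ _)
      (Continuous.intervalIntegrable (by fun_prop) _ _),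
    intervalIntegral.integral_comp_sub_right (fun s => Real.exp (-2 ^ n * s)) (n : ℝ),
    intervalIntegral.integral_comp_sub_left (fun s => Real.exp (-2 ^ n * s)) ((n : ℝ) + 1),
    sub_self, sub_self, add_sub_cancel_left, ← weightPrimitive_sub] at hint
  have hexp := integral_exp_neg_mul_le hc 1
  linarith [add_div (1 : ℝ) 1 (2 ^ n)]

theorem weightPrimitive_natCast_le (n : ℕ) : weightPrimitive n ≤ 4 - 4 / 2 ^ n := by
  induction n with
  | zero => simp [weightPrimitive_zero]
  | succ n ih =>
    have hstep := weightPrimitive_add_one_sub_le n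
    have hpow : (4 : ℝ) / 2 ^ (n + 1) = 4 / 2 ^ n - 2 / 2 ^ n := by
      rw [pow_succ]
      field_simp
      norm_num
    push_cast
    linarith

theorem bddAbove_range_weightPrimitive : BddAbove (range weightPrimitive) := by
  refine ⟨4, forall_mem_range.2 fun y => ?_⟩
  obtain ⟨N, hN⟩ := exists_nat_ge y
  have hmono := strictMono_weightPrimitive.monotone hN
  have hpos : (0 : ℝ) ≤ 4 / 2 ^ N := by positivity
  linarith [weightPrimitive_natCast_le N]

/-- The total mass of the weight on `[0, ∞)`. -/
noncomputable def weightMass : ℝ := sSup (range weightPrimitive)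

theorem range_weightPrimitive : range weightPrimitive = Iio weightMass := by
  refine Subset.antisymm (range_subset_iff.2 fun y => ?_) fun v hv => ?_
  · exact (strictMono_weightPrimitive (lt_add_one y)).trans_le
      (le_csSup bddAbove_range_weightPrimitive (mem_range_self _))
  · obtain ⟨_, ⟨y, rfl⟩, hy⟩ := exists_lt_of_lt_csSup (range_nonempty weightPrimitive) hv
    exact mem_range_of_exists_le_of_exists_ge lipschitzWith_weightPrimitive.continuous
      ⟨min v 0, (weightPrimitive_of_nonpos (min_le_right _ _)).trans_le (min_le_left _ _)⟩
      ⟨y, hy.le⟩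

/-- The map of the plane which squeezes each horizontal line at height `t` so that a
segment around each slit at this height is collapsed to a point, while the gaps between these
segments are stretched by the factor `(weight t)⁻¹`. -/
noncomputable def collapseMap (p : ℂ) : ℂ := ⟨dyadicRescale collapse p.re p.im, p.im⟩

/-- A right inverse of `collapseMap`. -/
noncomputable def expandMap (p : ℂ) : ℂ := ⟨dyadicRescale expand p.re p.im, p.im⟩

theorem dyadicRescale_collapse_sub_mem_Icc {a b : ℝ} (hab : a ≤ b) (t : ℝ) :
    dyadicRescale collapse b t - dyadicRescale collapse a t ∈ Icc 0 ((b - a) / weight t) := by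
  have hpow : (0 : ℝ) < 2 ^ ⌊t⌋₊ := by positivity
  have hmem := collapse_sub_mem_Icc (weight_pos t) (weight_le_one t)
    (mul_le_mul_of_nonneg_left hab hpow.le)
  rw [dyadicRescale, dyadicRescale, ← sub_div]
  refine ⟨div_nonneg hmem.1 hpow.le, (div_le_iff₀ hpow).2 (hmem.2.trans_eq ?_)⟩
  ring

theorem monotone_dyadicRescale_collapse (t : ℝ) : Monotone fun u => dyadicRescale collapse u t :=
  fun _ _ hab => sub_nonneg.1 (dyadicRescale_collapse_sub_mem_Icc hab t).1

theorem weight_mul_dist_dyadicRescale_collapse_le (a b t : ℝ) :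
    weight t * dist (dyadicRescale collapse a t) (dyadicRescale collapse b t) ≤ dist a b := by
  wlog hab : a ≤ b generalizing a b
  · rw [dist_comm, dist_comm a]
    exact this b a (le_of_not_ge hab)
  have hmem := dyadicRescale_collapse_sub_mem_Icc hab t
  rw [dist_comm, dist_comm a, Real.dist_eq, Real.dist_eq, abs_of_nonneg hmem.1,
    abs_of_nonneg (sub_nonneg.2 hab), mul_comm]
  exact (le_div_iff₀ (weight_pos t)).1 hmem.2

theorem lipschitzWith_dyadicRescale_collapse (u : ℝ) :
    LipschitzWith 1 (dyadicRescale collapse u) :=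
  lipschitzWith_dyadicRescale collapse_one (fun a d e _ _ => abs_collapse_exp_sub_le a d e) u

theorem continuous_mk_complex {Z : Type*} [TopologicalSpace Z] {f g : Z → ℝ} (hf : Continuous f)
    (hg : Continuous g) : Continuous fun z => (⟨f z, g z⟩ : ℂ) :=
  Complex.equivRealProdCLM.symm.continuous.comp (hf.prodMk hg)

theorem continuous_collapseMap : Continuous collapseMap := by
  have hcont : Continuous fun p : ℝ × ℝ => dyadicRescale collapse p.2 p.1 := by
    refine continuous_prod_of_continuous_lipschitzWith
      (fun p : ℝ × ℝ => dyadicRescale collapse p.2 p.1) 1 (fun t => ?_)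
      lipschitzWith_dyadicRescale_collapse
    refine (LipschitzWith.of_dist_le_mul (K := (NNReal.mk (weight t) (weight_pos t).le)⁻¹)
      fun a b => ?_).continuous
    rw [NNReal.coe_inv, NNReal.coe_mk, le_inv_mul_iff₀ (weight_pos t)]
    exact weight_mul_dist_dyadicRescale_collapse_le a b t
  have hre : Continuous fun p : ℂ => dyadicRescale collapse p.re p.im :=
    hcont.comp (f := fun p : ℂ => (p.im, p.re))
      (Complex.continuous_im.prodMk Complex.continuous_re)
  exact continuous_mk_complex hre Complex.continuous_im

theorem collapseMap_expandMap (p : ℂ) : collapseMap (expandMap p) = p := by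
  refine Complex.ext ?_ rfl
  change dyadicRescale collapse (dyadicRescale expand p.re p.im) p.im = p.re
  rw [dyadicRescale, dyadicRescale, mul_div_cancel₀ _ (by positivity),
    collapse_expand (weight_pos _) (weight_le_one _), mul_div_cancel_left₀ _ (by positivity)]

theorem dist_toFoldedPlane_collapseMap_le {p q : ℂ} {L : ℝ}
    (hL : ∀ y ∈ uIcc p.im q.im, weight y ≤ L) :
    dist (toFoldedPlane (collapseMap p)) (toFoldedPlane (collapseMap q)) ≤
      dist p.re q.re + 2 * L * dist p.im q.im := by
  set r : ℂ := ⟨q.re, p.im⟩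
  have hL0 : 0 ≤ L := (weight_pos _).le.trans (hL _ left_mem_uIcc)
  have hhor : dist (toFoldedPlane (collapseMap p)) (toFoldedPlane (collapseMap r)) ≤
      dist p.re q.re := by
    refine (dist_toFoldedPlane_le (p := collapseMap p) (q := collapseMap r) (L := weight p.im)
      fun y hy => ?_).trans
      ((mul_le_mul_of_nonneg_left (dist_le_dist_re_add_dist_im _ _) (weight_pos _).le).trans ?_)
    · have hyp : y ∈ uIcc p.im p.im := hy
      rw [uIcc_self, mem_singleton_iff] at hyp
      rw [hyp]
    · rw [show (collapseMap p).im = (collapseMap r).im from rfl, dist_self, add_zero]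
      exact weight_mul_dist_dyadicRescale_collapse_le p.re q.re p.im
  have hver : dist (toFoldedPlane (collapseMap r)) (toFoldedPlane (collapseMap q)) ≤
      L * (dist p.im q.im + dist p.im q.im) := by
    refine (dist_toFoldedPlane_le (p := collapseMap r) (q := collapseMap q) hL).trans
      (mul_le_mul_of_nonneg_left ((dist_le_dist_re_add_dist_im _ _).trans ?_) hL0)
    gcongr
    · exact ((lipschitzWith_dyadicRescale_collapse q.re).dist_le_mul p.im q.im).trans_eq
        (by rw [NNReal.coe_one, one_mul])
    · rfl
  linarith [dist_triangle (toFoldedPlane (collapseMap p)) (toFoldedPlane (collapseMap r))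
    (toFoldedPlane (collapseMap q))]

theorem isPreconnected_preimage_of_rightInvOn {X Y : Type*} [TopologicalSpace X]
    [TopologicalSpace Y] {f : X → Y} {s : Y → X} {T : Set Y} (hT : IsPreconnected T)
    (hs : ContinuousOn s T) (hfs : RightInvOn s f T)
    (hfib : ∀ y ∈ T, IsPreconnected (f ⁻¹' {y})) : IsPreconnected (f ⁻¹' T) := by
  rcases T.eq_empty_or_nonempty with rfl | ⟨y₀, hy₀⟩
  · exact isPreconnected_empty
  refine isPreconnected_of_forall (s y₀) fun x hx =>
    ⟨s '' T ∪ f ⁻¹' {f x}, ?_, Or.inl (mem_image_of_mem s hy₀), Or.inr rfl,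
      (hT.image s hs).union (s (f x)) (mem_image_of_mem s hx) (hfs hx) (hfib _ hx)⟩
  refine union_subset (image_subset_iff.2 fun y hy => ?_)
    (preimage_mono (singleton_subset_iff.2 hx))
  rwa [mem_preimage, mem_preimage, hfs hy]

theorem isometry_horizontalLine (y : ℝ) : Isometry fun x : ℝ => (⟨x, y⟩ : ℂ) :=
  Isometry.of_dist_eq fun x x' => by
    rw [Complex.dist_eq_re_im, Real.dist_eq]
    simp [Real.sqrt_sq_eq_abs]

theorem isPreconnected_preimage_collapseMap (q : ℂ) : IsPreconnected (collapseMap ⁻¹' {q}) := by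
  have hfiber : collapseMap ⁻¹' {q} = (fun x : ℝ => (⟨x, q.im⟩ : ℂ)) ''
      ((fun u => dyadicRescale collapse u q.im) ⁻¹' {q.re}) := by
    refine Subset.antisymm (fun p hp => ?_) ?_
    · have hpq : collapseMap p = q := hp
      exact ⟨p.re, by rw [← hpq]; rfl, by rw [← hpq]; rfl⟩
    · rintro _ ⟨x, hx, rfl⟩
      exact Complex.ext hx rfl
  rw [hfiber]
  exact (ordConnected_singleton.preimage_mono
    (monotone_dyadicRescale_collapse q.im)).isPreconnected.image _
    (isometry_horizontalLine _).continuous.continuousOn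

theorem isPreconnected_preimage_toFoldedPlane_comp_collapseMap (b : FoldedPlane) :
    IsPreconnected (toFoldedPlane ∘ collapseMap ⁻¹' {b}) := by
  rw [preimage_comp]
  refine isPreconnected_preimage_of_rightInvOn (isPreconnected_preimage_toFoldedPlane b) ?_
    (fun q _ => collapseMap_expandMap q) fun q _ => isPreconnected_preimage_collapseMap q
  have hline : Continuous fun z : ℂ =>
      (⟨dyadicRescale expand (FoldedPlane.homeomorph b).re z.im, z.im⟩ : ℂ) :=
    continuous_mk_complex ((lipschitzWith_dyadicRescale expand_one
      (fun a _ _ hd he => abs_expand_exp_sub_le a hd he) _).continuous.comp Complex.continuous_im)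
      Complex.continuous_im
  refine hline.continuousOn.congr fun z hz => ?_
  have hzb : fold z = FoldedPlane.homeomorph b := hz
  rw [← hzb]
  rfl

/-- The open cells of the strip `n < im z < n + 1` which `collapseMap` stretches onto the gaps
between neighbouring slits. -/
def injectiveCell (n : ℕ) (k : ℤ) : Set ℂ :=
  {p | p.im ∈ Ioo (n : ℝ) (n + 1) ∧ |2 ^ n * p.re - k| < weight p.im / 2}

/-- The open cells of the strip `n < im z < n + 1` which `collapseMap` sends into a single slit. -/
def collapsedCell (n : ℕ) (k : ℤ) : Set ℂ :=
  {p | p.im ∈ Ioo (n : ℝ) (n + 1) ∧ |2 ^ n * p.re - (k + 1 / 2)| < (1 - weight p.im) / 2}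

/-- The open set on which `toFoldedPlane ∘ collapseMap` is injective. -/
def injectiveRegion : Set ℂ := {p | p.im < 0} ∪ ⋃ (n : ℕ) (k : ℤ), injectiveCell n k

/-- The open set on which `toFoldedPlane ∘ collapseMap` is locally constant. -/
def collapsedRegion : Set ℂ := ⋃ (n : ℕ) (k : ℤ), collapsedCell n k

theorem continuous_weight_im : Continuous fun p : ℂ => weight p.im :=
  continuous_weight.comp Complex.continuous_im

theorem isOpen_strip (n : ℕ) : IsOpen {p : ℂ | p.im ∈ Ioo (n : ℝ) (n + 1)} :=
  isOpen_Ioo.preimage Complex.continuous_im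

theorem isOpen_injectiveCell (n : ℕ) (k : ℤ) : IsOpen (injectiveCell n k) :=
  (isOpen_strip n).inter (isOpen_lt
    ((Complex.continuous_re.const_mul _).sub continuous_const).abs
    (continuous_weight_im.div_const 2))

theorem isOpen_collapsedCell (n : ℕ) (k : ℤ) : IsOpen (collapsedCell n k) :=
  (isOpen_strip n).inter (isOpen_lt
    ((Complex.continuous_re.const_mul _).sub continuous_const).abs
    ((continuous_const.sub continuous_weight_im).div_const 2))

theorem isOpen_injectiveRegion : IsOpen injectiveRegion :=
  (isOpen_lt Complex.continuous_im continuous_const).union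
    (isOpen_iUnion fun n => isOpen_iUnion fun k => isOpen_injectiveCell n k)

theorem isOpen_collapsedRegion : IsOpen collapsedRegion :=
  isOpen_iUnion fun n => isOpen_iUnion fun k => isOpen_collapsedCell n k

theorem slitDist_add_half_div (n : ℕ) (k : ℤ) : slitDist n ((k + 1 / 2) / 2 ^ n) = 0 := by
  have hround : round ((k : ℝ) + 1 / 2) = k + 1 := by
    rw [round_eq, show (k : ℝ) + 1 / 2 + 1 / 2 = ((k + 1 : ℤ) : ℝ) by push_cast; ring,
      Int.floor_intCast]
  rw [slitDist, mul_div_cancel₀ _ (by positivity), distInt, hround]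
  push_cast
  rw [show (k : ℝ) + 1 / 2 - (k + 1) = -(1 / 2) by ring, abs_neg, abs_of_pos (by norm_num),
    sub_self]

section Cells

variable {n : ℕ} {k : ℤ} {p q : ℂ}

theorem fold_collapseMap_of_mem_collapsedCell (hp : p ∈ collapsedCell n k) :
    fold (collapseMap p) = ⟨(k + 1 / 2) / 2 ^ n, height ((k + 1 / 2) / 2 ^ n) n⟩ := by
  have hX : dyadicRescale collapse p.re p.im = (k + 1 / 2) / 2 ^ n := by
    rw [dyadicRescale_eq collapse_one p.re (Ioo_subset_Icc_self hp.1),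
      collapse_eq_add_half (weight_pos _) (weight_le_one _) hp.2.le]
  rw [fold, collapseMap, hX,
    height_eq_height_natCast (slitDist_add_half_div n k) (Ioo_subset_Icc_self hp.1)]

theorem two_pow_mul_collapseMap_re (hp : p ∈ injectiveCell n k) :
    2 ^ n * (collapseMap p).re = k + (2 ^ n * p.re - k) / weight p.im := by
  change 2 ^ n * dyadicRescale collapse p.re p.im = _
  rw [dyadicRescale_eq collapse_one p.re (Ioo_subset_Icc_self hp.1),
    collapse_eq_add_div (weight_pos _) (weight_le_one _) hp.2.le,
    mul_div_cancel₀ _ (by positivity)]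

theorem abs_two_pow_mul_collapseMap_re_sub_lt (hp : p ∈ injectiveCell n k) :
    |2 ^ n * (collapseMap p).re - k| < 1 / 2 := by
  rw [two_pow_mul_collapseMap_re hp, add_sub_cancel_left, abs_div, abs_of_pos (weight_pos _),
    div_lt_iff₀ (weight_pos _)]
  linarith [hp.2]

theorem two_pow_mul_re_sub (hp : p ∈ injectiveCell n k) :
    2 ^ n * p.re - k = weight p.im * (2 ^ n * (collapseMap p).re - k) := by
  rw [two_pow_mul_collapseMap_re hp, add_sub_cancel_left, mul_div_cancel₀ _ (weight_pos _).ne']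

theorem collapseMap_of_im_neg (hp : p.im < 0) : collapseMap p = p :=
  Complex.ext (dyadicRescale_of_weight_eq_one collapse_one _ (weight_of_nonpos hp.le)) rfl

theorem expandMap_collapseMap (hp : p ∈ injectiveRegion) : expandMap (collapseMap p) = p := by
  refine Complex.ext ?_ rfl
  change dyadicRescale expand (collapseMap p).re p.im = p.re
  rcases hp with hp | hp
  · rw [dyadicRescale_of_weight_eq_one expand_one _ (weight_of_nonpos (le_of_lt hp)),
      collapseMap_of_im_neg hp]
  · obtain ⟨n, k, hp⟩ := mem_iUnion₂.1 hp
    rw [dyadicRescale_eq expand_one _ (Ioo_subset_Icc_self hp.1), expand,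
      round_eq_of_abs_sub_lt (abs_two_pow_mul_collapseMap_re_sub_lt hp),
      mul_comm _ (weight _), ← two_pow_mul_re_sub hp, add_sub_cancel,
      mul_div_cancel_left₀ _ (by positivity)]

theorem collapseMap_notMem_slits (hp : p ∈ injectiveRegion) : collapseMap p ∉ slits := by
  rintro ⟨j, hslit, hj⟩
  change p.im ∈ Icc (j : ℝ) (j + 1) at hj
  rcases hp with hp | hp
  · exact absurd (j.cast_nonneg.trans hj.1) (not_le.2 hp)
  · obtain ⟨n, k, hp⟩ := mem_iUnion₂.1 hp
    have hjn : j < n + 1 := by exact_mod_cast hj.1.trans_lt hp.1.2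
    have hnj : n < j + 1 := by exact_mod_cast hp.1.1.trans_le hj.2
    obtain rfl : j = n := by lia
    have hround := round_le (2 ^ j * (collapseMap p).re) k
    have hlt := abs_two_pow_mul_collapseMap_re_sub_lt hp
    rw [slitDist, distInt] at hslit
    linarith

theorem injOn_toFoldedPlane_comp_collapseMap :
    InjOn (toFoldedPlane ∘ collapseMap) injectiveRegion := fun p hp q hq h => by
  rw [← expandMap_collapseMap hp, ← expandMap_collapseMap hq,
    injOn_toFoldedPlane (collapseMap_notMem_slits hp) (collapseMap_notMem_slits hq) h]

theorem dist_weight_le {W : ℝ} {s t : ℝ} (hs : s ∈ Icc (n : ℝ) (n + 1))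
    (ht : t ∈ Icc (n : ℝ) (n + 1)) (hsW : weight s ≤ W) (htW : weight t ≤ W) :
    dist (weight s) (weight t) ≤ W * (2 ^ n * dist s t) := by
  have hW : 0 ≤ W := (weight_pos s).le.trans hsW
  refine (abs_exp_sub_exp_le hsW htW).trans (mul_le_mul_of_nonneg_left ?_ hW)
  rw [neg_sub_neg, abs_sub_comm]
  exact_mod_cast (lipschitzOnWith_weightExponent n).dist_le_mul s hs t ht

theorem dist_re_le_of_mem_injectiveCell (hp : p ∈ injectiveCell n k) (hq : q ∈ injectiveCell n k)
    {W : ℝ} (hpW : weight p.im ≤ W) (hqW : weight q.im ≤ W) :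
    dist p.re q.re ≤ W * (dist (collapseMap p).re (collapseMap q).re + dist p.im q.im) := by
  have hpow : (0 : ℝ) < 2 ^ n := by positivity
  set P := 2 ^ n * (collapseMap p).re - k
  set Q := 2 ^ n * (collapseMap q).re - k
  have hre : 2 ^ n * (p.re - q.re) = weight p.im * (P - Q) + (weight p.im - weight q.im) * Q := by
    linear_combination two_pow_mul_re_sub hp - two_pow_mul_re_sub hq
  have hfirst : |weight p.im * (P - Q)| ≤
      W * (2 ^ n * dist (collapseMap p).re (collapseMap q).re) := by
    rw [abs_mul, abs_of_pos (weight_pos _), sub_sub_sub_cancel_right, ← mul_sub, abs_mul,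
      abs_of_pos hpow, Real.dist_eq]
    exact mul_le_mul_of_nonneg_right hpW (by positivity)
  have hsecond : |(weight p.im - weight q.im) * Q| ≤ W * (2 ^ n * dist p.im q.im) := by
    have hQ1 : |Q| ≤ 1 := (abs_two_pow_mul_collapseMap_re_sub_lt hq).le.trans (by norm_num)
    rw [abs_mul]
    exact (mul_le_of_le_one_right (abs_nonneg _) hQ1).trans (dist_weight_le
      (Ioo_subset_Icc_self hp.1) (Ioo_subset_Icc_self hq.1) hpW hqW)
  refine le_of_mul_le_mul_left ?_ hpow
  calc 2 ^ n * dist p.re q.re = |2 ^ n * (p.re - q.re)| := by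
        rw [abs_mul, abs_of_pos hpow, Real.dist_eq]
    _ ≤ |weight p.im * (P - Q)| + |(weight p.im - weight q.im) * Q| := hre ▸ abs_add_le _ _
    _ ≤ 2 ^ n * (W * (dist (collapseMap p).re (collapseMap q).re + dist p.im q.im)) := by
        linarith

end Cells

theorem dist_re_le_dist (p q : ℂ) : dist p.re q.re ≤ dist p q := by
  simpa only [NNReal.coe_one, one_mul] using lipschitzWith_re.dist_le_mul p q

theorem dist_im_le_dist (p q : ℂ) : dist p.im q.im ≤ dist p q := by
  simpa only [NNReal.coe_one, one_mul] using lipschitzWith_im.dist_le_mul p q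

theorem exists_nhds_dist_re_le {a : ℂ} (ha : a ∈ injectiveRegion) :
    ∃ U ∈ 𝓝 a, ∀ p ∈ U, ∀ q ∈ U, ∀ W, weight p.im ≤ W → weight q.im ≤ W →
      dist p.re q.re ≤ 2 * W * dist (collapseMap p) (collapseMap q) := by
  rcases ha with ha | ha
  · refine ⟨{p | p.im < 0}, (isOpen_lt Complex.continuous_im continuous_const).mem_nhds ha,
      fun p hp q hq W hpW _ => ?_⟩
    rw [weight_of_nonpos (le_of_lt hp)] at hpW
    rw [collapseMap_of_im_neg hp, collapseMap_of_im_neg hq]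
    exact (dist_re_le_dist p q).trans (le_mul_of_one_le_left dist_nonneg (by linarith))
  · obtain ⟨n, k, ha⟩ := mem_iUnion₂.1 ha
    refine ⟨injectiveCell n k, (isOpen_injectiveCell n k).mem_nhds ha,
      fun p hp q hq W hpW hqW => (dist_re_le_of_mem_injectiveCell hp hq hpW hqW).trans ?_⟩
    have hre := dist_re_le_dist (collapseMap p) (collapseMap q)
    have him : dist p.im q.im ≤ _ := dist_im_le_dist (collapseMap p) (collapseMap q)
    rw [mul_comm 2 W, mul_assoc, two_mul]
    exact mul_le_mul_of_nonneg_left (add_le_add hre him) ((weight_pos _).le.trans hpW)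

theorem hausdorffMeasure_two_graph_weight (n : ℕ) (c e : ℝ) :
    μH[2] ((fun t : ℝ => (⟨(c + e * weight t) / 2 ^ n, t⟩ : ℂ)) '' Icc (n : ℝ) (n + 1)) = 0 := by
  refine hausdorffMeasure_two_image_eq_zero (K := Real.nnabs e + 1)
    (LipschitzOnWith.of_dist_le_mul fun s hs t ht => (dist_le_dist_re_add_dist_im _ _).trans ?_)
  have hweight := dist_weight_le hs ht (weight_le_one s) (weight_le_one t)
  rw [one_mul] at hweight
  rw [NNReal.coe_add, Real.coe_nnabs, NNReal.coe_one, add_mul, one_mul]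
  refine add_le_add ?_ le_rfl
  change dist ((c + e * weight s) / 2 ^ n) ((c + e * weight t) / 2 ^ n) ≤ _
  rw [Real.dist_eq, ← sub_div, add_sub_add_left_eq_sub, ← mul_sub, abs_div, abs_mul,
    abs_of_pos (by positivity : (0 : ℝ) < 2 ^ n), div_le_iff₀ (by positivity), mul_assoc]
  rw [Real.dist_eq, mul_comm] at hweight
  exact mul_le_mul_of_nonneg_left hweight (abs_nonneg e)

theorem compl_injectiveRegion_union_collapsedRegion_subset :
    (injectiveRegion ∪ collapsedRegion)ᶜ ⊆
      (⋃ n : ℕ, range fun x : ℝ => (⟨x, n⟩ : ℂ)) ∪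
      ⋃ (n : ℕ) (k : ℤ) (e ∈ ({1 / 2, -1 / 2} : Set ℝ)),
        (fun t : ℝ => (⟨(k + e * weight t) / 2 ^ n, t⟩ : ℂ)) '' Icc (n : ℝ) (n + 1) := by
  rintro p hp
  contrapose! hp
  obtain ⟨hline, hgraph⟩ := not_or.1 hp
  rw [notMem_compl_iff]
  rcases lt_or_ge p.im 0 with him | him
  · exact Or.inl (Or.inl him)
  set n := ⌊p.im⌋₊
  set k := round (2 ^ n * p.re)
  have hstrip : p.im ∈ Ioo (n : ℝ) (n + 1) := by
    refine ⟨lt_of_le_of_ne (Nat.floor_le him) fun hne => ?_, Nat.lt_floor_add_one _⟩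
    exact hline (mem_iUnion.2 ⟨n, p.re, Complex.ext rfl hne⟩)
  have hne : ∀ e ∈ ({1 / 2, -1 / 2} : Set ℝ), 2 ^ n * p.re ≠ k + e * weight p.im := by
    intro e he heq
    refine hgraph (mem_iUnion₂.2 ⟨n, k, mem_iUnion₂.2
      ⟨e, he, p.im, Ioo_subset_Icc_self hstrip, Complex.ext ?_ rfl⟩⟩)
    change (k + e * weight p.im) / 2 ^ n = p.re
    rw [← heq, mul_div_cancel_left₀ _ (by positivity)]
  have hround := abs_le.1 (abs_sub_round (2 ^ n * p.re))
  have hcollapsed : ∀ m : ℤ, |2 ^ n * p.re - (m + 1 / 2)| < (1 - weight p.im) / 2 →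
      p ∈ injectiveRegion ∪ collapsedRegion := fun m hm =>
    Or.inr (mem_iUnion₂.2 ⟨n, m, hstrip, hm⟩)
  rcases lt_or_gt_of_ne (hne (1 / 2) (by simp)) with hright | hright
  · rcases lt_or_gt_of_ne (hne (-1 / 2) (by simp)) with hleft | hleft
    · refine hcollapsed (k - 1) (abs_lt.2 ?_)
      push_cast
      constructor <;> linarith
    · refine Or.inl (Or.inr (mem_iUnion₂.2 ⟨n, k, hstrip, abs_lt.2 ?_⟩))
      constructor <;> linarith
  · refine hcollapsed k (abs_lt.2 ?_)
    constructor <;> linarith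

theorem hausdorffMeasure_two_compl_injectiveRegion_union_collapsedRegion :
    μH[2] (injectiveRegion ∪ collapsedRegion)ᶜ = 0 := by
  refine measure_mono_null compl_injectiveRegion_union_collapsedRegion_subset
    (measure_union_null (measure_iUnion_null fun n => ?_)
      (measure_iUnion_null fun n => measure_iUnion_null fun k =>
        (measure_biUnion_null_iff (Set.toFinite _).countable).2 fun e _ =>
          hausdorffMeasure_two_graph_weight n k e))
  rw [← image_univ]
  exact hausdorffMeasure_two_image_eq_zero (isometry_horizontalLine _).lipschitz.lipschitzOnWith

/-! ### The parametrization by the disk -/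

/-- The half-plane which `straighten` maps onto the plane. -/
def weightHalfPlane : Set ℂ := {z | z.im < weightMass}

theorem isOpen_weightHalfPlane : IsOpen weightHalfPlane :=
  isOpen_lt Complex.continuous_im continuous_const

/-- `weightPrimitive` as a homeomorphism onto its range. -/
noncomputable def weightPrimitiveHomeomorph : ℝ ≃ₜ Iio weightMass :=
  ((strictMono_weightPrimitive.orderIso _).trans
    (OrderIso.setCongr _ _ range_weightPrimitive)).toHomeomorph

/-- The homeomorphism of a half-plane onto the plane which turns the height `weightPrimitive t`
into `t`. -/
noncomputable def straighten : weightHalfPlane ≃ₜ ℂ where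
  toFun z := ⟨z.1.re, weightPrimitiveHomeomorph.symm ⟨z.1.im, z.2⟩⟩
  invFun p := ⟨⟨p.re, weightPrimitive p.im⟩, (weightPrimitiveHomeomorph p.im).2⟩
  left_inv z := Subtype.ext (Complex.ext rfl
    (congrArg Subtype.val (weightPrimitiveHomeomorph.apply_symm_apply ⟨z.1.im, z.2⟩)))
  right_inv p := Complex.ext rfl (weightPrimitiveHomeomorph.symm_apply_apply p.im)
  continuous_toFun := continuous_mk_complex (Complex.continuous_re.comp continuous_subtype_val)
    (weightPrimitiveHomeomorph.symm.continuous.comp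
      ((Complex.continuous_im.comp continuous_subtype_val).subtype_mk _))
  continuous_invFun := (continuous_mk_complex Complex.continuous_re
    (lipschitzWith_weightPrimitive.continuous.comp Complex.continuous_im)).subtype_mk _

theorem straighten_re (z : weightHalfPlane) : (straighten z).re = z.1.re := rfl

theorem weightPrimitive_straighten_im (z : weightHalfPlane) :
    weightPrimitive (straighten z).im = z.1.im :=
  congrArg Subtype.val (weightPrimitiveHomeomorph.apply_symm_apply ⟨z.1.im, z.2⟩)

theorem lipschitzWith_straighten_symm : LipschitzWith 2 straighten.symm :=
  LipschitzWith.of_dist_le_mul fun p q => by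
    have him := lipschitzWith_weightPrimitive.dist_le_mul p.im q.im
    rw [NNReal.coe_one, one_mul] at him
    refine (dist_le_dist_re_add_dist_im _ _).trans ?_
    rw [NNReal.coe_ofNat, two_mul]
    exact add_le_add (dist_re_le_dist p q) (him.trans (dist_im_le_dist p q))

theorem exists_nhds_straighten_weight_mem (a : weightHalfPlane) :
    ∃ U ∈ 𝓝 a, ∀ x ∈ U, ∀ y ∈ U, ∀ s ∈ uIcc (straighten x).im (straighten y).im,
      weight s ∈ Icc (weight (straighten a).im / 2) (2 * weight (straighten a).im) := by
  obtain ⟨ε, hε, hball⟩ := exists_forall_ball_weight_mem (straighten a).im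
  refine ⟨(fun x => (straighten x).im) ⁻¹' ball (straighten a).im ε,
    (Complex.continuous_im.comp straighten.continuous).continuousAt (ball_mem_nhds _ hε),
    fun x hx y hy s hs => hball s ?_⟩
  exact (convex_ball _ ε).segment_subset hx hy (segment_eq_uIcc (𝕜 := ℝ) .. ▸ hs)

/-- The parametrization of the folded plane by a half-plane. -/
noncomputable def halfPlaneToFoldedPlane : weightHalfPlane → FoldedPlane :=
  toFoldedPlane ∘ collapseMap ∘ straighten

theorem exists_nhds_lipschitzOnWith_halfPlaneToFoldedPlane (a : weightHalfPlane) :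
    ∃ U ∈ 𝓝 a, LipschitzOnWith 9 halfPlaneToFoldedPlane U := by
  obtain ⟨U, hU, hweight⟩ := exists_nhds_straighten_weight_mem a
  refine ⟨U, hU, LipschitzOnWith.of_dist_le_mul fun x hx y hy => ?_⟩
  have hupper := dist_toFoldedPlane_collapseMap_le fun s hs => (hweight x hx y hy s hs).2
  have hlower := mul_dist_le_dist_weightPrimitive fun s hs => (hweight x hx y hy s hs).1
  rw [weightPrimitive_straighten_im, weightPrimitive_straighten_im] at hlower
  rw [straighten_re, straighten_re] at hupper
  refine hupper.trans ?_
  rw [NNReal.coe_ofNat]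
  linarith [dist_re_le_dist x.1 y.1, dist_im_le_dist x.1 y.1, Subtype.dist_eq x y]

theorem exists_nhds_dist_le_dist_halfPlaneToFoldedPlane {a : weightHalfPlane}
    (ha : straighten a ∈ injectiveRegion) :
    ∃ U ∈ 𝓝 a, ∀ x ∈ U, ∀ y ∈ U,
      dist x y ≤ 12 * dist (halfPlaneToFoldedPlane x) (halfPlaneToFoldedPlane y) := by
  obtain ⟨U, hU, hweight⟩ := exists_nhds_straighten_weight_mem a
  obtain ⟨V, hV, hre⟩ := exists_nhds_dist_re_le ha
  have hpos := weight_pos (straighten a).im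
  obtain ⟨ε, hε, hfold⟩ := exists_mul_dist_le_foldDist_fold (collapseMap_notMem_slits ha)
    (m := NNReal.mk (weight (straighten a).im / 2) (by positivity)) (half_lt_self hpos)
  refine ⟨U ∩ (straighten ⁻¹' V ∩ (collapseMap ∘ straighten) ⁻¹' ball _ ε),
    inter_mem hU (inter_mem (straighten.continuous.continuousAt hV)
      ((continuous_collapseMap.comp straighten.continuous).continuousAt (ball_mem_nhds _ hε))), ?_⟩
  rintro x ⟨hxU, hxV, hxε⟩ y ⟨hyU, hyV, hyε⟩
  have hre := hre _ hxV _ hyV _ (hweight x hxU y hyU _ left_mem_uIcc).2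
    (hweight x hxU y hyU _ right_mem_uIcc).2
  have him := dist_weightPrimitive_le fun s hs => (hweight x hxU y hyU s hs).2
  rw [weightPrimitive_straighten_im, weightPrimitive_straighten_im] at him
  have him' : dist (straighten x).im (straighten y).im ≤ _ :=
    dist_im_le_dist (collapseMap (straighten x)) (collapseMap (straighten y))
  have hfold : weight (straighten a).im / 2 *
      dist (collapseMap (straighten x)) (collapseMap (straighten y)) ≤
    dist (halfPlaneToFoldedPlane x) (halfPlaneToFoldedPlane y) := hfold _ hxε _ hyε
  calc dist x y ≤ dist x.1.re y.1.re + dist x.1.im y.1.im := dist_le_dist_re_add_dist_im x.1 y.1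
    _ ≤ 6 * weight (straighten a).im *
        dist (collapseMap (straighten x)) (collapseMap (straighten y)) := by
      have := him.trans (mul_le_mul_of_nonneg_left him' (by positivity))
      rw [straighten_re, straighten_re] at hre
      linarith
    _ ≤ 12 * dist (halfPlaneToFoldedPlane x) (halfPlaneToFoldedPlane y) := by linarith

theorem surjective_halfPlaneToFoldedPlane : Function.Surjective halfPlaneToFoldedPlane :=
  surjective_toFoldedPlane.comp ((Function.RightInverse.surjective collapseMap_expandMap).comp
    straighten.surjective)

theorem injOn_halfPlaneToFoldedPlane :
    InjOn halfPlaneToFoldedPlane (straighten ⁻¹' injectiveRegion) :=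
  injOn_toFoldedPlane_comp_collapseMap.comp straighten.injective.injOn (mapsTo_preimage _ _)

theorem isPreconnected_preimage_halfPlaneToFoldedPlane (b : FoldedPlane) :
    IsPreconnected (halfPlaneToFoldedPlane ⁻¹' {b}) := by
  rw [halfPlaneToFoldedPlane, ← Function.comp_assoc, preimage_comp]
  exact straighten.isPreconnected_preimage.2
    (isPreconnected_preimage_toFoldedPlane_comp_collapseMap b)

theorem ae_straighten_mem_injectiveRegion_union_collapsedRegion :
    ∀ᵐ x ∂(μH[2] : Measure weightHalfPlane),
      straighten x ∈ injectiveRegion ∪ collapsedRegion := by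
  have himage := lipschitzWith_straighten_symm.hausdorffMeasure_image_le zero_le_two
    (injectiveRegion ∪ collapsedRegion)ᶜ
  rw [hausdorffMeasure_two_compl_injectiveRegion_union_collapsedRegion, mul_zero,
    nonpos_iff_eq_zero, straighten.image_symm] at himage
  exact himage

/-- The local Lipschitz constants of `halfPlaneToFoldedPlane`. -/
noncomputable def halfPlaneLipschitzBound : weightHalfPlane → ℝ≥0 :=
  (straighten ⁻¹' collapsedRegion)ᶜ.indicator fun _ => 9

theorem localLipschitzBound_halfPlaneToFoldedPlane :
    LocalLipschitzBound halfPlaneToFoldedPlane halfPlaneLipschitzBound := by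
  intro a
  by_cases ha : straighten a ∈ collapsedRegion
  · obtain ⟨n, k, hcell⟩ := mem_iUnion₂.1 ha
    refine ⟨straighten ⁻¹' collapsedCell n k,
      straighten.continuous.continuousAt ((isOpen_collapsedCell n k).mem_nhds hcell),
      fun x hx y hy => ?_⟩
    have heq : halfPlaneToFoldedPlane x = halfPlaneToFoldedPlane y :=
      (fold_collapseMap_of_mem_collapsedCell hx).trans
        (fold_collapseMap_of_mem_collapsedCell hy).symm
    rw [heq, edist_self]
    exact bot_le
  · rw [halfPlaneLipschitzBound, indicator_of_mem ha]
    exact exists_nhds_lipschitzOnWith_halfPlaneToFoldedPlane a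

theorem halfPlaneLipschitzBound_le (x : weightHalfPlane) : halfPlaneLipschitzBound x ≤ 9 :=
  indicator_le_self _ _ x

theorem locallyExpandsOn_halfPlaneToFoldedPlane :
    LocallyExpandsOn halfPlaneToFoldedPlane halfPlaneLipschitzBound 108
      (straighten ⁻¹' injectiveRegion) := by
  intro a ha
  obtain ⟨U, hU, hdist⟩ := exists_nhds_dist_le_dist_halfPlaneToFoldedPlane ha
  refine ⟨U, hU, 9, fun x _ => halfPlaneLipschitzBound_le x, fun x hx y hy => ?_⟩
  rw [NNReal.coe_ofNat, NNReal.coe_ofNat]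
  linarith [hdist x hx.1 y hy.1]

theorem weaklyQC_halfPlaneToFoldedPlane :
    WeaklyQC (((108 : ℝ≥0) : ℝ) ^ 2) halfPlaneToFoldedPlane := by
  have := isOpen_weightHalfPlane.polishSpace
  have hcont := straighten.continuous
  refine weaklyQC_of_locallyExpandsOn localLipschitzBound_halfPlaneToFoldedPlane ?_
    (isOpen_injectiveRegion.preimage hcont).measurableSet (by norm_num)
    locallyExpandsOn_halfPlaneToFoldedPlane ?_ injOn_halfPlaneToFoldedPlane
    surjective_halfPlaneToFoldedPlane isPreconnected_preimage_halfPlaneToFoldedPlane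
  · exact measurable_const.indicator (isOpen_collapsedRegion.preimage hcont).measurableSet.compl
  · filter_upwards [ae_straighten_mem_injectiveRegion_union_collapsedRegion] with x hx hinj
    exact indicator_of_notMem (not_not.2 (hx.resolve_left hinj)) _

section Cayley

variable {z w : ℂ}

theorem one_sub_ne_zero_of_mem_ball (hz : z ∈ ball (0 : ℂ) 1) : 1 - z ≠ 0 := by
  rintro h
  rw [← sub_eq_zero.1 h, mem_ball_zero_iff, norm_one] at hz
  exact hz.false

theorem add_one_ne_zero_of_re_pos (hw : 0 < w.re) : w + 1 ≠ 0 := fun h => by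
  have hre := congrArg Complex.re h
  rw [Complex.add_re, Complex.one_re, Complex.zero_re] at hre
  linarith

theorem re_one_add_div_one_sub_pos (hz : z ∈ ball (0 : ℂ) 1) : 0 < ((1 + z) / (1 - z)).re := by
  rw [Complex.div_re, ← add_div]
  refine div_pos ?_ (Complex.normSq_pos.2 (one_sub_ne_zero_of_mem_ball hz))
  have hnorm : Complex.normSq z < 1 := by
    rw [Complex.normSq_eq_norm_sq]
    exact pow_lt_one₀ (norm_nonneg z) (mem_ball_zero_iff.1 hz) two_ne_zero
  rw [Complex.normSq_apply] at hnorm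
  simp only [Complex.add_re, Complex.sub_re, Complex.one_re, Complex.add_im, Complex.sub_im,
    Complex.one_im]
  linarith

theorem sub_one_div_add_one_mem_ball (hw : 0 < w.re) : (w - 1) / (w + 1) ∈ ball (0 : ℂ) 1 := by
  rw [mem_ball_zero_iff, norm_div, div_lt_one (norm_pos_iff.2 (add_one_ne_zero_of_re_pos hw))]
  refine lt_of_pow_lt_pow_left₀ 2 (norm_nonneg _) ?_
  rw [← Complex.normSq_eq_norm_sq, ← Complex.normSq_eq_norm_sq, Complex.normSq_apply,
    Complex.normSq_apply]
  simp only [Complex.add_re, Complex.sub_re, Complex.one_re, Complex.add_im, Complex.sub_im,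
    Complex.one_im]
  linarith

theorem one_add_div_one_sub_sub_one_div_add_one (hw : w + 1 ≠ 0) :
    (1 + (w - 1) / (w + 1)) / (1 - (w - 1) / (w + 1)) = w := by
  have hnum : 1 + (w - 1) / (w + 1) = 2 * w / (w + 1) := by field_simp; ring
  have hden : 1 - (w - 1) / (w + 1) = 2 / (w + 1) := by field_simp; ring
  rw [hnum, hden, div_div_div_cancel_right₀ hw, mul_div_cancel_left₀ _ two_ne_zero]

variable (V : ℝ)

/-- The Möbius transformation which maps the unit disk onto the half-plane `im z < V`. -/
noncomputable def diskToHalfPlane (z : ℂ) : ℂ := Complex.I * (V - (1 + z) / (1 - z))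

theorem diskToHalfPlane_im_lt (hz : z ∈ ball (0 : ℂ) 1) : (diskToHalfPlane V z).im < V := by
  rw [diskToHalfPlane, Complex.I_mul_im, Complex.sub_re, Complex.ofReal_re]
  linarith [re_one_add_div_one_sub_pos hz]

theorem add_I_mul_diskToHalfPlane (z : ℂ) :
    V + Complex.I * diskToHalfPlane V z = (1 + z) / (1 - z) := by
  rw [diskToHalfPlane]
  linear_combination (V - (1 + z) / (1 - z)) * Complex.I_mul_I

theorem re_add_I_mul_pos (hz : z.im < V) : 0 < (V + Complex.I * z).re := by
  rw [Complex.add_re, Complex.I_mul_re, Complex.ofReal_re]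
  linarith

/-- `diskToHalfPlane` as a homeomorphism. -/
noncomputable def diskHomeomorphHalfPlane : ball (0 : ℂ) 1 ≃ₜ {z : ℂ | z.im < V} where
  toFun z := ⟨diskToHalfPlane V z, diskToHalfPlane_im_lt V z.2⟩
  invFun z := ⟨(V + Complex.I * z - 1) / (V + Complex.I * z + 1),
    sub_one_div_add_one_mem_ball (re_add_I_mul_pos V z.2)⟩
  left_inv z := by
    have hz := one_sub_ne_zero_of_mem_ball z.2
    refine Subtype.ext ?_
    simp only [add_I_mul_diskToHalfPlane]
    field_simp
    ring
  right_inv z := by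
    have hne := add_one_ne_zero_of_re_pos (re_add_I_mul_pos V z.2)
    refine Subtype.ext (mul_left_cancel₀ Complex.I_ne_zero (add_left_cancel (a := (V : ℂ)) ?_))
    exact (add_I_mul_diskToHalfPlane V _).trans (one_add_div_one_sub_sub_one_div_add_one hne)
  continuous_toFun := by
    have hdiv : Continuous fun z : ball (0 : ℂ) 1 => (1 + z.1) / (1 - z.1) :=
      Continuous.div (by fun_prop) (by fun_prop) fun z => one_sub_ne_zero_of_mem_ball z.2
    exact (continuous_const.mul (continuous_const.sub hdiv)).subtype_mk _
  continuous_invFun := (Continuous.div (by fun_prop) (by fun_prop)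
    fun z => add_one_ne_zero_of_re_pos (re_add_I_mul_pos V z.2)).subtype_mk _

theorem hasDerivAt_diskToHalfPlane (hz : 1 - z ≠ 0) :
    HasDerivAt (diskToHalfPlane V) (-(2 * Complex.I) / (1 - z) ^ 2) z := by
  have hdiv := ((hasDerivAt_id z).const_add 1).div ((hasDerivAt_id z).const_sub 1) hz
  refine ((hdiv.const_sub (V : ℂ)).const_mul Complex.I).congr_deriv ?_
  simp only [id]
  ring

theorem weaklyQC_diskHomeomorphHalfPlane : WeaklyQC 1 (diskHomeomorphHalfPlane V) := by
  refine weaklyQC_one_of_differentiableOn isOpen_ball (f := diskToHalfPlane V)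
    (fun z hz => ?_) (fun _ => rfl) fun z hz => ?_
  · exact (hasDerivAt_diskToHalfPlane V
      (one_sub_ne_zero_of_mem_ball hz)).differentiableAt.differentiableWithinAt
  · have hne := one_sub_ne_zero_of_mem_ball hz
    rw [(hasDerivAt_diskToHalfPlane V hne).deriv]
    exact div_ne_zero (neg_ne_zero.2 (mul_ne_zero two_ne_zero Complex.I_ne_zero))
      (pow_ne_zero 2 hne)

end Cayley

/-!
STATEMENT 11 (main claim): There exists a length metric space `X` homeomorphic to the
plane `ℂ`, with locally finite Hausdorff 2-measure, admitting weakly quasiconformal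
parametrizations by both the open unit disk `𝔻` and the plane `ℂ`.
-/

theorem exists_surface_parametrized_by_disk_and_plane :
    ∃ (X : Type) (_ : MetricSpace X) (_ : MeasurableSpace X) (_ : BorelSpace X),
      IsLengthSpace X ∧
      Nonempty (X ≃ₜ ℂ) ∧
      IsLocallyFiniteMeasure (hausdorff2 X) ∧
      (∃ K₁ : ℝ, 1 ≤ K₁ ∧ ∃ h₁ : ↥(Metric.ball (0 : ℂ) 1) → X, WeaklyQC K₁ h₁) ∧
      (∃ K₂ : ℝ, 1 ≤ K₂ ∧ ∃ h₂ : ℂ → X, WeaklyQC K₂ h₂) := by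
  have hdisk : WeaklyQC (1 * ((108 : ℝ≥0) : ℝ) ^ 2)
      (halfPlaneToFoldedPlane ∘ diskHomeomorphHalfPlane weightMass) :=
    weaklyQC_halfPlaneToFoldedPlane.comp_homeomorph
      (weaklyQC_diskHomeomorphHalfPlane weightMass) zero_le_one
  exact ⟨FoldedPlane, inferInstance, inferInstance, inferInstance, isLengthSpace_foldedPlane,
    ⟨FoldedPlane.homeomorph⟩, isLocallyFiniteMeasure_foldedPlane,
    ⟨_, by norm_num, _, hdisk⟩, ⟨_, by norm_num, _, weaklyQC_toFoldedPlane⟩⟩
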